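/- Let q be a braiding matrix with connected Dynkin diagram such that B_q is finite dimensional, and let B be a pre-Nichols algebra of q with finite GKdim. Let i,j,k,ℓ ∈ I_θ be such that q̃_{jk} = q̃_{ij} = q_{jj}^{−1} ∈ G_4' ∪ G_6', q_{ii} = q_{kk} = −1, q̃_{ik} = q̃_{iℓ} = q̃_{jℓ} = 1 and q̃_{jk}³ = q̃_{ℓk}. Then [[x_{ijk}, [x_{ijkℓ}, x_k]_c]_c, x_{jk}]_c = 0 in B. -/

import Mathlib

/-
Common framework for formalizing statements from
"Finite GK-dimensional pre-Nichols algebras of (super)modular and unidentified type"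
(Angiono, Campagnolo, Sanmarco).

We work over `ℂ` (an algebraically closed field of characteristic zero).
A braiding matrix is `q : Fin θ → Fin θ → ℂˣ`.  The tensor algebra `T(V)` of the
associated braided vector space of diagonal type is realized as the free algebra
on `Fin θ`.  The braided bialgebra structure on `T(V)` (the braided coproduct,
uniquely determined by the braiding matrix) is packaged in the structure
`BraidedStr`: its fields characterize it uniquely, so quantifying over
`S : BraidedStr θ q` is equivalent to using "the" braided coproduct.

A pre-Nichols algebra of `q` is the quotient `T(V)/I` by an ℕ₀-homogeneous
(two-sided) braided bi-ideal `I` generated in degrees ≥ 2 (`IsPreNicholsIdeal`);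
such an ideal is automatically contained in the defining ideal `Jq` of the
Nichols algebra, which is the largest such ideal.  A statement
"`x = 0` holds in the pre-Nichols algebra `T(V)/I`" is formalized as `x ∈ I`.
-/

open scoped TensorProduct

noncomputable section

namespace PreNicholsPaper

/-- The tensor algebra `T(V)` of the braided vector space of diagonal type of rank `θ`. -/
abbrev TV (θ : ℕ) := FreeAlgebra ℂ (Fin θ)

/-- The generator `x_i` of `T(V)`. -/
def gen (θ : ℕ) (i : Fin θ) : TV θ := FreeAlgebra.ι ℂ i

/-- The monomial `x_{i_1} ⋯ x_{i_n}` associated to a word. -/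
def wordElem (θ : ℕ) (w : List (Fin θ)) : TV θ := (w.map (gen θ)).prod

/-- The multidegree in `ℕ₀^θ` of a word. -/
def degW (θ : ℕ) (w : List (Fin θ)) : Fin θ → ℕ := fun i => w.count i

/-- `α_i`, the `i`-th canonical basis vector of `ℕ₀^θ`. -/
def δ (θ : ℕ) (i : Fin θ) : Fin θ → ℕ := fun k => if k = i then 1 else 0

/-- The bilinear form `ℕ₀^θ × ℕ₀^θ → ℂˣ` attached to the braiding matrix,
`q(α_i, α_j) = q_{ij}`, evaluated in `ℂ`. -/
def qf {θ : ℕ} (q : Fin θ → Fin θ → ℂˣ) (a b : Fin θ → ℕ) : ℂ :=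
  ∏ i : Fin θ, ∏ j : Fin θ, (q i j : ℂ) ^ (a i * b j)

/-- `q̃_{ij} = q_{ij} q_{ji}`. -/
def qtil {θ : ℕ} (q : Fin θ → Fin θ → ℂˣ) (i j : Fin θ) : ℂ := (q i j : ℂ) * (q j i : ℂ)

/-- The braided commutator `[u,v]_c = uv - q(a,b) vu` of elements `u, v`
which are homogeneous of multidegrees `a`, `b` respectively. -/
def brk {θ : ℕ} (q : Fin θ → Fin θ → ℂˣ) (a b : Fin θ → ℕ) (u v : TV θ) : TV θ :=
  u * v - qf q a b • (v * u)

/-- `(ad_c x_i) y = x_i y - q(α_i, b) y x_i` for `y` homogeneous of multidegree `b`. -/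
def ad1 {θ : ℕ} (q : Fin θ → Fin θ → ℂˣ) (i : Fin θ) (b : Fin θ → ℕ) (y : TV θ) : TV θ :=
  brk q (δ θ i) b (gen θ i) y

/-- The iterated braided adjoint `x_{i_1 i_2 ⋯ i_k} = (ad_c x_{i_1}) x_{i_2 ⋯ i_k}`. -/
def xw {θ : ℕ} (q : Fin θ → Fin θ → ℂˣ) : List (Fin θ) → TV θ
  | [] => 1
  | [i] => gen θ i
  | i :: w => ad1 q i (degW θ w) (xw q w)

/-- `(ad_c x_i)^m x_j`. -/
def adpow {θ : ℕ} (q : Fin θ → Fin θ → ℂˣ) (i j : Fin θ) : ℕ → TV θ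
  | 0 => gen θ j
  | m + 1 => ad1 q i (fun k => m * δ θ i k + δ θ j k) (adpow q i j m)

/-- The homogeneous component of total degree `n` of `T(V)`. -/
def homogTot (θ : ℕ) (n : ℕ) : Submodule ℂ (TV θ) :=
  Submodule.span ℂ {x | ∃ w : List (Fin θ), w.length = n ∧ x = wordElem θ w}

/-- The homogeneous component of multidegree `d ∈ ℕ₀^θ` of `T(V)`. -/
def homogD (θ : ℕ) (d : Fin θ → ℕ) : Submodule ℂ (TV θ) :=
  Submodule.span ℂ {x | ∃ w : List (Fin θ), degW θ w = d ∧ x = wordElem θ w}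

/-- The braided bialgebra structure on `T(V)` determined by the braiding matrix `q`:
the braided coproduct `Δ` together with the multiplication `mulB` of the braided
tensor product `T(V) ⊗ T(V)`.  These axioms determine `Δ` and `mulB` uniquely. -/
structure BraidedStr (θ : ℕ) (q : Fin θ → Fin θ → ℂˣ) where
  Δ : TV θ →ₗ[ℂ] TensorProduct ℂ (TV θ) (TV θ)
  mulB : TensorProduct ℂ (TV θ) (TV θ) →ₗ[ℂ]
    TensorProduct ℂ (TV θ) (TV θ) →ₗ[ℂ] TensorProduct ℂ (TV θ) (TV θ)
  mulB_spec : ∀ (a d : TV θ) (wb wc : List (Fin θ)),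
    mulB (a ⊗ₜ[ℂ] wordElem θ wb) (wordElem θ wc ⊗ₜ[ℂ] d)
      = qf q (degW θ wb) (degW θ wc) • ((a * wordElem θ wc) ⊗ₜ[ℂ] (wordElem θ wb * d))
  Δ_one : Δ 1 = 1 ⊗ₜ[ℂ] 1
  Δ_gen : ∀ i, Δ (gen θ i) = gen θ i ⊗ₜ[ℂ] 1 + 1 ⊗ₜ[ℂ] gen θ i
  Δ_mul : ∀ u v : TV θ, Δ (u * v) = mulB (Δ u) (Δ v)

variable {θ : ℕ} {q : Fin θ → Fin θ → ℂˣ}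

/-- `x` is a primitive element. -/
def IsPrimitiveIn (S : BraidedStr θ q) (x : TV θ) : Prop :=
  S.Δ x = x ⊗ₜ[ℂ] (1 : TV θ) + (1 : TV θ) ⊗ₜ[ℂ] x

/-- The submodule `I ⊗ T(V) + T(V) ⊗ J` of `T(V) ⊗ T(V)`. -/
def mixedPair (I J : Submodule ℂ (TV θ)) : Submodule ℂ (TensorProduct ℂ (TV θ) (TV θ)) :=
  Submodule.span ℂ
    ({x | ∃ a b : TV θ, a ∈ I ∧ x = a ⊗ₜ[ℂ] b} ∪ {x | ∃ a b : TV θ, b ∈ J ∧ x = a ⊗ₜ[ℂ] b})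

/-- The submodule `I ⊗ T(V) + T(V) ⊗ I` of `T(V) ⊗ T(V)`. -/
def mixedSub (I : Submodule ℂ (TV θ)) : Submodule ℂ (TensorProduct ℂ (TV θ) (TV θ)) :=
  mixedPair I I

/-- `I` is the defining ideal of a pre-Nichols algebra of `q`：an ℕ₀-homogeneous
two-sided (bi-)ideal of `T(V)` generated in degrees `≥ 2` which is also a coideal.
Such an ideal is automatically contained in the defining ideal `Jq` of the Nichols
algebra, and the pre-Nichols algebra is the quotient `T(V)/I`. -/
structure IsPreNicholsIdeal (S : BraidedStr θ q) (I : Submodule ℂ (TV θ)) : Prop where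
  mul_left : ∀ a x : TV θ, x ∈ I → a * x ∈ I
  mul_right : ∀ a x : TV θ, x ∈ I → x * a ∈ I
  homog_ge2 : I = Submodule.span ℂ {x | x ∈ I ∧ ∃ n, 2 ≤ n ∧ x ∈ homogTot θ n}
  coideal : ∀ x ∈ I, S.Δ x ∈ mixedSub I

/-- The defining ideal `J_q` of the Nichols algebra `B_q = T(V)/J_q`:
the maximal homogeneous braided Hopf ideal generated in degrees `≥ 2`. -/
def Jq (S : BraidedStr θ q) : Submodule ℂ (TV θ) := sSup {I | IsPreNicholsIdeal S I}

/-- The standard filtration of `T(V)`: span of words of length `≤ n`. -/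
def Wfil (θ : ℕ) (n : ℕ) : Submodule ℂ (TV θ) :=
  Submodule.span ℂ {x | ∃ w : List (Fin θ), w.length ≤ n ∧ x = wordElem θ w}

/-- The quotient algebra `T(V)/I` has finite Gelfand–Kirillov dimension, i.e.
the standard filtration of the (finitely generated) quotient has polynomial growth. -/
def FinGK (I : Submodule ℂ (TV θ)) : Prop :=
  ∃ C d : ℕ, ∀ n : ℕ, Module.finrank ℂ ((Wfil θ n).map I.mkQ) ≤ C * (n + 1) ^ d

/-- The Gelfand–Kirillov dimension of the quotient algebra `T(V)/I`. -/
def GKdim (I : Submodule ℂ (TV θ)) : ℝ :=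
  Filter.limsup
    (fun n : ℕ => Real.log (Module.finrank ℂ ((Wfil θ n).map I.mkQ)) / Real.log n)
    Filter.atTop

/-- `I` defines an eminent pre-Nichols algebra: it is a finite-GKdim pre-Nichols
algebra, and every finite-GKdim pre-Nichols algebra of `q` is a quotient of it. -/
def IsEminent (S : BraidedStr θ q) (I : Submodule ℂ (TV θ)) : Prop :=
  IsPreNicholsIdeal S I ∧ FinGK I ∧
    ∀ I' : Submodule ℂ (TV θ), IsPreNicholsIdeal S I' → FinGK I' → I ≤ I'

/-- The Dynkin diagram of the braiding matrix `q`: vertices `Fin θ`, an edge between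
`i ≠ j` iff `q̃_{ij} ≠ 1`. -/
def dynkin {θ : ℕ} (q : Fin θ → Fin θ → ℂˣ) : SimpleGraph (Fin θ) :=
  SimpleGraph.fromRel (fun i j => qtil q i j ≠ 1)

/-- The quantum number `(m)_t = 1 + t + ⋯ + t^{m-1}`. -/
def qnum (t : ℂ) (m : ℕ) : ℂ := ∑ k ∈ Finset.range m, t ^ k

/-- The set of `n ∈ ℕ₀` such that `(n+1)_{q_{ii}} (1 - q_{ii}^n q̃_{ij}) = 0`,
i.e. such that `(ad_c x_i)^{n+1} x_j = 0` in the Nichols algebra.  The entry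
`c_{ij}` of the generalized Cartan matrix is `-(min of this set)`. -/
def cSet {θ : ℕ} (q : Fin θ → Fin θ → ℂˣ) (i j : Fin θ) : Set ℕ :=
  {n | qnum (q i i : ℂ) (n + 1) * (1 - (q i i : ℂ) ^ n * qtil q i j) = 0}

/-- The generalized Cartan matrix of `q`. -/
def cij {θ : ℕ} (q : Fin θ → Fin θ → ℂˣ) (i j : Fin θ) : ℤ :=
  if i = j then 2 else -(Int.ofNat (sInf (cSet q i j)))

/-- All entries `c_{ij}` are defined at the vertex `i`. -/
def reflectable {θ : ℕ} (q : Fin θ → Fin θ → ℂˣ) (i : Fin θ) : Prop :=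
  ∀ j, j ≠ i → (cSet q i j).Nonempty

/-- The `i`-th reflection of the braiding matrix:
`(r_i q)_{jk} = q(s_i α_j, s_i α_k)` where `s_i α_j = α_j - c_{ij} α_i`. -/
def reflectMat {θ : ℕ} (q : Fin θ → Fin θ → ℂˣ) (i : Fin θ) : Fin θ → Fin θ → ℂˣ :=
  fun j k =>
    q j k * q j i ^ (-(cij q i k)) * q i k ^ (-(cij q i j)) * q i i ^ (cij q i j * cij q i k)

/-- The reflection `s_i` acting on `ℤ^θ`. -/
def sRefl {θ : ℕ} (q : Fin θ → Fin θ → ℂˣ) (i : Fin θ) (β : Fin θ → ℤ) : Fin θ → ℤ :=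
  fun k => β k - (if k = i then ∑ j, cij q i j * β j else 0)

/-- The (real) roots of `q`, together with the base points of the Weyl groupoid at
which they live: pairs `(q', β)` obtained from a simple root of `q` by iterated
reflections. -/
inductive ReachRoot {θ : ℕ} (q₀ : Fin θ → Fin θ → ℂˣ) :
    (Fin θ → Fin θ → ℂˣ) → (Fin θ → ℤ) → Prop
  | simple (j : Fin θ) : ReachRoot q₀ q₀ (fun k => if k = j then 1 else 0)
  | reflect {q' : Fin θ → Fin θ → ℂˣ} {β : Fin θ → ℤ} (i : Fin θ) :
      ReachRoot q₀ q' β → ReachRoot q₀ (reflectMat q' i) (sRefl q' i β)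

/-- `q` has a finite (generalized) root system: all reflections are defined at every
point of the Weyl groupoid, and the set of roots so obtained is finite. -/
def FiniteRootSystem {θ : ℕ} (q : Fin θ → Fin θ → ℂˣ) : Prop :=
  (∀ q' i, (∃ β, ReachRoot q q' β) → reflectable q' i) ∧
    Set.Finite {β : Fin θ → ℤ | ∃ q', ReachRoot q q' β}

/-- Conjecture (Andruskiewitsch–Angiono–Heckenberger): the root system of a Nichols
algebra of diagonal type with finite Gelfand–Kirillov dimension is finite. -/
def AAH : Prop :=
  ∀ (θ : ℕ) (q : Fin θ → Fin θ → ℂˣ) (S : BraidedStr θ q), FinGK (Jq S) → FiniteRootSystem q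

/-- The two-sided ideal of `T(V)` generated by a set. -/
def idealGen (θ : ℕ) (s : Set (TV θ)) : Submodule ℂ (TV θ) :=
  Submodule.span ℂ {x | ∃ g ∈ s, ∃ a b : TV θ, x = a * g * b}

end PreNicholsPaper

namespace PreNicholsPaper

section Basics

variable {θ : ℕ} {q : Fin θ → Fin θ → ℂˣ}

/-- The basis of `T(V)` consisting of words. -/
def wordBasis (θ : ℕ) : Module.Basis (List (Fin θ)) ℂ (TV θ) :=
  (FreeAlgebra.basisFreeMonoid ℂ (Fin θ)).reindex FreeMonoid.toList

lemma wordElem_nil : wordElem θ [] = 1 := rfl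

lemma wordElem_cons (i : Fin θ) (w : List (Fin θ)) :
    wordElem θ (i :: w) = gen θ i * wordElem θ w := by
  simp [wordElem]

lemma wordElem_append (v w : List (Fin θ)) :
    wordElem θ (v ++ w) = wordElem θ v * wordElem θ w := by
  simp [wordElem]

lemma wordElem_singleton (i : Fin θ) : wordElem θ [i] = gen θ i := by
  simp [wordElem]

lemma wordBasis_apply (w : List (Fin θ)) : wordBasis θ w = wordElem θ w := by
  have h : (FreeAlgebra.equivMonoidAlgebraFreeMonoid (R := ℂ) (X := Fin θ)).symm
      (MonoidAlgebra.of ℂ (FreeMonoid (Fin θ)) (FreeMonoid.ofList w)) = wordElem θ w := by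
    change MonoidAlgebra.lift ℂ _ _ (FreeMonoid.lift (FreeAlgebra.ι ℂ)) _ = _
    rw [MonoidAlgebra.lift_of, FreeMonoid.lift_apply]
    rfl
  rw [← h]
  simp only [wordBasis, Module.Basis.reindex_apply, FreeAlgebra.basisFreeMonoid,
    Module.Basis.map_apply]
  rw [Finsupp.coe_basisSingleOne]
  rfl

lemma degW_append (v w : List (Fin θ)) : degW θ (v ++ w) = degW θ v + degW θ w := by
  ext i; simp [degW]

lemma degW_nil : degW θ [] = 0 := by
  ext i; simp [degW]

lemma degW_singleton (i : Fin θ) : degW θ [i] = δ θ i := by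
  ext k
  by_cases h : k = i
  · simp [degW, δ, h]
  · simp [degW, δ, h, Ne.symm h]

lemma degW_cons (i : Fin θ) (w : List (Fin θ)) : degW θ (i :: w) = δ θ i + degW θ w := by
  rw [← degW_singleton, ← degW_append]; rfl

lemma qf_add_left (a b c : Fin θ → ℕ) : qf q (a + b) c = qf q a c * qf q b c := by
  simp [qf, add_mul, pow_add, Finset.prod_mul_distrib]

lemma qf_add_right (a b c : Fin θ → ℕ) : qf q a (b + c) = qf q a b * qf q a c := by
  simp [qf, mul_add, pow_add, Finset.prod_mul_distrib]

lemma qf_zero_left (a : Fin θ → ℕ) : qf q 0 a = 1 := by simp [qf]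

lemma qf_zero_right (a : Fin θ → ℕ) : qf q a 0 = 1 := by simp [qf]

lemma qf_delta (i j : Fin θ) : qf q (δ θ i) (δ θ j) = q i j := by
  rw [qf, Finset.prod_eq_single i, Finset.prod_eq_single j] <;>
    simp +contextual [δ]

lemma qf_ne_zero (a b : Fin θ → ℕ) : qf q a b ≠ 0 := by
  simp [qf, Finset.prod_ne_zero_iff]

lemma linearMap_ext_words {M : Type*} [AddCommMonoid M] [Module ℂ M] {f g : TV θ →ₗ[ℂ] M}
    (h : ∀ w, f (wordElem θ w) = g (wordElem θ w)) : f = g :=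
  (wordBasis θ).ext fun w => by simpa [wordBasis_apply] using h w

lemma tensor_ext_words {M : Type*} [AddCommMonoid M] [Module ℂ M]
    {f g : TV θ ⊗[ℂ] TV θ →ₗ[ℂ] M}
    (h : ∀ v w, f (wordElem θ v ⊗ₜ wordElem θ w) = g (wordElem θ v ⊗ₜ wordElem θ w)) : f = g :=
  ((wordBasis θ).tensorProduct (wordBasis θ)).ext fun ⟨v, w⟩ => by
    simpa [wordBasis_apply] using h v w

end Basics

section Existence

variable {θ : ℕ} (q : Fin θ → Fin θ → ℂˣ)

/-- The basis of `T(V) ⊗ T(V)` consisting of tensors of words. -/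
def wordBasis₂ (θ : ℕ) : Module.Basis (List (Fin θ) × List (Fin θ)) ℂ (TV θ ⊗[ℂ] TV θ) :=
  (wordBasis θ).tensorProduct (wordBasis θ)

lemma wordBasis₂_apply (v w : List (Fin θ)) :
    wordBasis₂ θ (v, w) = wordElem θ v ⊗ₜ wordElem θ w := by
  simp [wordBasis₂, wordBasis_apply]

/-- The multiplication of the braided tensor product `T(V) ⊗ T(V)`. -/
def braidedMul : TV θ ⊗[ℂ] TV θ →ₗ[ℂ] TV θ ⊗[ℂ] TV θ →ₗ[ℂ] TV θ ⊗[ℂ] TV θ :=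
  (wordBasis₂ θ).constr ℂ fun a => (wordBasis₂ θ).constr ℂ fun b =>
    qf q (degW θ a.2) (degW θ b.1) •
      (wordElem θ (a.1 ++ b.1) ⊗ₜ[ℂ] wordElem θ (a.2 ++ b.2))

lemma braidedMul_words (a b c d : List (Fin θ)) :
    braidedMul q (wordElem θ a ⊗ₜ wordElem θ b) (wordElem θ c ⊗ₜ wordElem θ d) =
      qf q (degW θ b) (degW θ c) • (wordElem θ (a ++ c) ⊗ₜ[ℂ] wordElem θ (b ++ d)) := by
  rw [← wordBasis₂_apply, ← wordBasis₂_apply, braidedMul, Module.Basis.constr_basis,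
    Module.Basis.constr_basis]

lemma braidedMul_spec (a d : TV θ) (wb wc : List (Fin θ)) :
    braidedMul q (a ⊗ₜ[ℂ] wordElem θ wb) (wordElem θ wc ⊗ₜ[ℂ] d) =
      qf q (degW θ wb) (degW θ wc) • ((a * wordElem θ wc) ⊗ₜ[ℂ] (wordElem θ wb * d)) := by
  have h := tensor_ext_words (θ := θ)
    (f := TensorProduct.lift (((braidedMul q).compl₁₂
      ((TensorProduct.mk ℂ (TV θ) (TV θ)).flip (wordElem θ wb))
      (TensorProduct.mk ℂ (TV θ) (TV θ) (wordElem θ wc)))))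
    (g := qf q (degW θ wb) (degW θ wc) • TensorProduct.map
      (LinearMap.mulRight ℂ (wordElem θ wc)) (LinearMap.mulLeft ℂ (wordElem θ wb)))
    (fun v w => by simp [braidedMul_words, wordElem_append])
  simpa using LinearMap.congr_fun h (a ⊗ₜ d)

lemma braidedMul_assoc (X Y Z : TV θ ⊗[ℂ] TV θ) :
    braidedMul q X (braidedMul q Y Z) = braidedMul q (braidedMul q X Y) Z := by
  have h : (LinearMap.llcomp ℂ _ _ _ ).compl₁₂ (braidedMul q) (braidedMul q) =
      (LinearMap.llcomp ℂ _ _ _ (braidedMul q)) ∘ₗ braidedMul q := by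
    refine tensor_ext_words fun a b => tensor_ext_words fun c d => tensor_ext_words fun e f => ?_
    simp only [LinearMap.compl₁₂_apply, LinearMap.llcomp_apply, LinearMap.comp_apply,
      braidedMul_words, map_smul, LinearMap.smul_apply, smul_smul, List.append_assoc,
      degW_append, qf_add_left, qf_add_right]
    congr 1
    ring
  simpa using LinearMap.congr_fun (LinearMap.congr_fun (LinearMap.congr_fun h X) Y) Z

/-- Left multiplication by `Δ u` on the braided tensor product, as an algebra map in `u`. -/
def coprodEnd : TV θ →ₐ[ℂ] Module.End ℂ (TV θ ⊗[ℂ] TV θ) :=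
  FreeAlgebra.lift ℂ fun i => braidedMul q (gen θ i ⊗ₜ 1 + 1 ⊗ₜ gen θ i)

lemma braidedMul_one_left (X : TV θ ⊗[ℂ] TV θ) : braidedMul q (1 ⊗ₜ 1) X = X := by
  have h : braidedMul q (1 ⊗ₜ 1) = LinearMap.id := tensor_ext_words fun a b => by
    rw [← wordElem_nil, braidedMul_words]; simp [degW_nil, qf_zero_left]
  rw [h]; rfl

lemma braidedMul_one_right (X : TV θ ⊗[ℂ] TV θ) : braidedMul q X (1 ⊗ₜ 1) = X := by
  have h : (braidedMul q).flip (1 ⊗ₜ 1) = LinearMap.id := tensor_ext_words fun a b => by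
    rw [← wordElem_nil, LinearMap.flip_apply, braidedMul_words]; simp [degW_nil, qf_zero_right]
  exact LinearMap.congr_fun h X

lemma coprodEnd_gen (i : Fin θ) :
    coprodEnd q (gen θ i) = braidedMul q (gen θ i ⊗ₜ 1 + 1 ⊗ₜ gen θ i) := by
  simp [coprodEnd, gen]

lemma coprodEnd_eq (u : TV θ) (X : TV θ ⊗[ℂ] TV θ) :
    coprodEnd q u X = braidedMul q (coprodEnd q u (1 ⊗ₜ 1)) X := by
  have h : (coprodEnd q).toLinearMap =
      braidedMul q ∘ₗ LinearMap.applyₗ (1 ⊗ₜ 1) ∘ₗ (coprodEnd q).toLinearMap := by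
    refine linearMap_ext_words fun w => ?_
    simp only [AlgHom.toLinearMap_apply, LinearMap.comp_apply, LinearMap.applyₗ_apply_apply]
    induction w with
    | nil => refine LinearMap.ext fun Y => ?_; simp [wordElem_nil, braidedMul_one_left]
    | cons i w ih =>
      refine LinearMap.ext fun Y => ?_
      rw [wordElem_cons, map_mul, Module.End.mul_apply, Module.End.mul_apply, ih,
        coprodEnd_gen, braidedMul_assoc, ← ih]
  exact LinearMap.congr_fun (LinearMap.congr_fun h u) X

/-- The braided bialgebra structure on `T(V)`. -/
def braidedStr : BraidedStr θ q where
  Δ := LinearMap.applyₗ (1 ⊗ₜ 1) ∘ₗ (coprodEnd q).toLinearMap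
  mulB := braidedMul q
  mulB_spec := braidedMul_spec q
  Δ_one := by simp
  Δ_gen i := by simp [coprodEnd_gen, braidedMul_one_right, -map_add]
  Δ_mul u v := by
    simp only [LinearMap.comp_apply, AlgHom.toLinearMap_apply, map_mul,
      LinearMap.applyₗ_apply_apply, Module.End.mul_apply]
    rw [← coprodEnd_eq]

end Existence

section Stability

variable {θ : ℕ} {q : Fin θ → Fin θ → ℂˣ}

lemma wordElem_concat (i : Fin θ) (w : List (Fin θ)) :
    wordElem θ (w ++ [i]) = wordElem θ w * gen θ i := by
  rw [wordElem_append, wordElem_singleton]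

lemma wordElem_mem_homogD (w : List (Fin θ)) : wordElem θ w ∈ homogD θ (degW θ w) :=
  Submodule.subset_span ⟨w, rfl, rfl⟩

lemma one_mem_homogD : (1 : TV θ) ∈ homogD θ 0 := by
  simpa [degW_nil, wordElem_nil] using wordElem_mem_homogD (θ := θ) []

lemma gen_mem_homogD (i : Fin θ) : gen θ i ∈ homogD θ (δ θ i) := by
  simpa [degW_singleton, wordElem_singleton] using wordElem_mem_homogD (θ := θ) [i]

lemma mul_mem_homogD {a b : Fin θ → ℕ} {x y : TV θ} (hx : x ∈ homogD θ a) (hy : y ∈ homogD θ b) :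
    x * y ∈ homogD θ (a + b) := by
  have h := Submodule.mul_mem_mul hx hy
  rw [homogD, homogD, Submodule.span_mul_span] at h
  refine Submodule.span_mono ?_ h
  rintro _ ⟨_, ⟨v, hv, rfl⟩, _, ⟨w, hw, rfl⟩, rfl⟩
  exact ⟨v ++ w, by rw [degW_append, hv, hw], (wordElem_append v w).symm⟩

/-- The automorphism `y ↦ q(a, deg y) y` of `T(V)`. -/
def actL (q : Fin θ → Fin θ → ℂˣ) (a : Fin θ → ℕ) : TV θ →ₗ[ℂ] TV θ :=
  (wordBasis θ).constr ℂ fun w => qf q a (degW θ w) • wordElem θ w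

/-- The automorphism `y ↦ q(deg y, a) y` of `T(V)`. -/
def actR (q : Fin θ → Fin θ → ℂˣ) (a : Fin θ → ℕ) : TV θ →ₗ[ℂ] TV θ :=
  (wordBasis θ).constr ℂ fun w => qf q (degW θ w) a • wordElem θ w

lemma actL_word (a : Fin θ → ℕ) (w : List (Fin θ)) :
    actL q a (wordElem θ w) = qf q a (degW θ w) • wordElem θ w := by
  rw [← wordBasis_apply, actL, Module.Basis.constr_basis, wordBasis_apply]

lemma actR_word (a : Fin θ → ℕ) (w : List (Fin θ)) :
    actR q a (wordElem θ w) = qf q (degW θ w) a • wordElem θ w := by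
  rw [← wordBasis_apply, actR, Module.Basis.constr_basis, wordBasis_apply]

lemma actR_of_mem {a b : Fin θ → ℕ} {x : TV θ} (hx : x ∈ homogD θ b) :
    actR q a x = qf q b a • x := by
  have h : homogD θ b ≤ LinearMap.ker (actR q a - qf q b a • LinearMap.id) := by
    refine Submodule.span_le.2 ?_
    rintro _ ⟨w, rfl, rfl⟩
    simp [actR_word]
  simpa [sub_eq_zero] using h hx

lemma BraidedStr.mulB_word_right (S : BraidedStr θ q) (a b d : TV θ) (w : List (Fin θ)) :
    S.mulB (a ⊗ₜ b) (wordElem θ w ⊗ₜ d) =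
      (a * wordElem θ w) ⊗ₜ (actR q (degW θ w) b * d) := by
  have h : (S.mulB.flip (wordElem θ w ⊗ₜ d)) ∘ₗ TensorProduct.mk ℂ (TV θ) (TV θ) a =
      TensorProduct.mk ℂ (TV θ) (TV θ) (a * wordElem θ w) ∘ₗ LinearMap.mulRight ℂ d ∘ₗ
        actR q (degW θ w) := by
    refine linearMap_ext_words fun v => ?_
    simp [S.mulB_spec, actR_word]
  exact LinearMap.congr_fun h b

lemma BraidedStr.mulB_word_left (S : BraidedStr θ q) (a c d : TV θ) (w : List (Fin θ)) :
    S.mulB (a ⊗ₜ wordElem θ w) (c ⊗ₜ d) =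
      (a * actL q (degW θ w) c) ⊗ₜ (wordElem θ w * d) := by
  have h : S.mulB (a ⊗ₜ wordElem θ w) ∘ₗ (TensorProduct.mk ℂ (TV θ) (TV θ)).flip d =
      (TensorProduct.mk ℂ (TV θ) (TV θ)).flip (wordElem θ w * d) ∘ₗ LinearMap.mulLeft ℂ a ∘ₗ
        actL q (degW θ w) := by
    refine linearMap_ext_words fun v => ?_
    simp [S.mulB_spec, actL_word, TensorProduct.smul_tmul']
  exact LinearMap.congr_fun h c

lemma BraidedStr.mulB_homog (S : BraidedStr θ q) {β γ : Fin θ → ℕ} (a d : TV θ) {b c : TV θ}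
    (hb : b ∈ homogD θ β) (hc : c ∈ homogD θ γ) :
    S.mulB (a ⊗ₜ b) (c ⊗ₜ d) = qf q β γ • ((a * c) ⊗ₜ (b * d)) := by
  have h : homogD θ γ ≤ LinearMap.ker
      (S.mulB (a ⊗ₜ b) ∘ₗ (TensorProduct.mk ℂ (TV θ) (TV θ)).flip d -
      qf q β γ • (TensorProduct.mk ℂ (TV θ) (TV θ)).flip (b * d) ∘ₗ LinearMap.mulLeft ℂ a) := by
    refine Submodule.span_le.2 ?_
    rintro _ ⟨w, rfl, rfl⟩
    simp [S.mulB_word_right, actR_of_mem hb]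
  simpa [sub_eq_zero] using h hc

/-- The counit of `T(V)`. -/
def counit (θ : ℕ) : TV θ →ₗ[ℂ] ℂ := (wordBasis θ).coord []

/-- The coefficient of the generator `x_i`. -/
def genCoeff (i : Fin θ) : TV θ →ₗ[ℂ] ℂ := (wordBasis θ).coord [i]

lemma coord_word (v w : List (Fin θ)) :
    (wordBasis θ).coord v (wordElem θ w) = if w = v then 1 else 0 := by
  rw [← wordBasis_apply, Module.Basis.coord_apply, Module.Basis.repr_self, Finsupp.single_apply]

lemma counit_word (w : List (Fin θ)) : counit θ (wordElem θ w) = if w = [] then 1 else 0 :=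
  coord_word _ _

lemma genCoeff_word (i : Fin θ) (w : List (Fin θ)) :
    genCoeff i (wordElem θ w) = if w = [i] then 1 else 0 :=
  coord_word _ _

lemma coord_homogTot {n : ℕ} {x : TV θ} (hx : x ∈ homogTot θ n) {v : List (Fin θ)}
    (hv : v.length ≠ n) : (wordBasis θ).coord v x = 0 := by
  have h : homogTot θ n ≤ LinearMap.ker ((wordBasis θ).coord v) := by
    refine Submodule.span_le.2 ?_
    rintro _ ⟨w, rfl, rfl⟩
    have : w ≠ v := by rintro rfl; exact hv rfl
    simp only [SetLike.mem_coe, LinearMap.mem_ker, coord_word, this, if_false]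
  exact h hx

lemma IsPreNicholsIdeal.coord_eq_zero {S : BraidedStr θ q} {I : Submodule ℂ (TV θ)}
    (hI : IsPreNicholsIdeal S I) {x : TV θ} (hx : x ∈ I) {v : List (Fin θ)} (hv : v.length < 2) :
    (wordBasis θ).coord v x = 0 := by
  have h : I ≤ LinearMap.ker ((wordBasis θ).coord v) := by
    rw [hI.homog_ge2]
    refine Submodule.span_le.2 ?_
    rintro y ⟨-, n, hn, hy⟩
    exact coord_homogTot hy (by omega)
  exact h hx

/-- The functional `f ⊗ g` on `T(V) ⊗ T(V)`. -/
def tensorFun (f g : TV θ →ₗ[ℂ] ℂ) : TV θ ⊗[ℂ] TV θ →ₗ[ℂ] ℂ :=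
  LinearMap.mul' ℂ ℂ ∘ₗ TensorProduct.map f g

@[simp] lemma tensorFun_tmul (f g : TV θ →ₗ[ℂ] ℂ) (x y : TV θ) :
    tensorFun f g (x ⊗ₜ y) = f x * g y := by simp [tensorFun]

lemma tensorFun_mixedSub {I : Submodule ℂ (TV θ)} {f g : TV θ →ₗ[ℂ] ℂ}
    (hf : ∀ x ∈ I, f x = 0) (hg : ∀ x ∈ I, g x = 0) {X : TV θ ⊗[ℂ] TV θ} (hX : X ∈ mixedSub I) :
    tensorFun f g X = 0 := by
  have h : mixedSub I ≤ LinearMap.ker (tensorFun f g) := by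
    refine Submodule.span_le.2 ?_
    rintro _ (⟨a, b, ha, rfl⟩ | ⟨a, b, hb, rfl⟩)
    · simp [hf a ha]
    · simp [hg b hb]
  exact h hX

lemma BraidedStr.Δ_word_cons (S : BraidedStr θ q) (i : Fin θ) (w : List (Fin θ)) :
    S.Δ (wordElem θ (i :: w)) =
      S.mulB (gen θ i ⊗ₜ 1 + 1 ⊗ₜ gen θ i) (S.Δ (wordElem θ w)) := by
  rw [wordElem_cons, S.Δ_mul, S.Δ_gen]

lemma BraidedStr.mulB_gen_words (S : BraidedStr θ q) (i : Fin θ) (v w : List (Fin θ)) :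
    S.mulB (gen θ i ⊗ₜ 1 + 1 ⊗ₜ gen θ i) (wordElem θ v ⊗ₜ wordElem θ w) =
      wordElem θ (i :: v) ⊗ₜ wordElem θ w +
        qf q (δ θ i) (degW θ v) • (wordElem θ v ⊗ₜ wordElem θ (i :: w)) := by
  have h1 := S.mulB_spec (gen θ i) (wordElem θ w) [] v
  have h2 := S.mulB_spec 1 (wordElem θ w) [i] v
  rw [wordElem_nil] at h1
  rw [wordElem_singleton] at h2
  rw [map_add, LinearMap.add_apply, h1, h2]
  simp [degW_nil, qf_zero_left, wordElem_cons, degW_singleton]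

lemma BraidedStr.mulB_words_gen (S : BraidedStr θ q) (i : Fin θ) (v w : List (Fin θ)) :
    S.mulB (wordElem θ v ⊗ₜ wordElem θ w) (gen θ i ⊗ₜ 1 + 1 ⊗ₜ gen θ i) =
      qf q (degW θ w) (δ θ i) • (wordElem θ (v ++ [i]) ⊗ₜ wordElem θ w) +
        (wordElem θ v ⊗ₜ wordElem θ (w ++ [i])) := by
  have h1 := S.mulB_spec (wordElem θ v) (gen θ i) w []
  have h2 := S.mulB_spec (wordElem θ v) 1 w [i]
  rw [wordElem_nil] at h1
  rw [wordElem_singleton] at h2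
  rw [map_add, h1, h2]
  simp [degW_nil, qf_zero_right, wordElem_append, degW_singleton, wordElem_singleton]

lemma BraidedStr.counit_left (S : BraidedStr θ q) (f : TV θ →ₗ[ℂ] ℂ) (x : TV θ) :
    tensorFun (counit θ) f (S.Δ x) = f x := by
  have h : tensorFun (counit θ) f ∘ₗ S.Δ = f := by
    refine linearMap_ext_words fun w => ?_
    rw [LinearMap.comp_apply]
    induction w generalizing f with
    | nil =>
      have := counit_word (θ := θ) []
      rw [wordElem_nil] at this ⊢
      simp [S.Δ_one, this]
    | cons i w ih =>
      have h2 : tensorFun (counit θ) f ∘ₗ S.mulB (gen θ i ⊗ₜ 1 + 1 ⊗ₜ gen θ i) =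
          tensorFun (counit θ) (f ∘ₗ LinearMap.mulLeft ℂ (gen θ i)) := by
        refine tensor_ext_words fun u v => ?_
        rw [LinearMap.comp_apply, S.mulB_gen_words]
        cases u <;> simp [counit_word, degW_nil, qf_zero_right, ← wordElem_cons]
      rw [S.Δ_word_cons, ← LinearMap.comp_apply, h2, ih, wordElem_cons]
      rfl
  exact LinearMap.congr_fun h x

lemma BraidedStr.counit_right (S : BraidedStr θ q) (f : TV θ →ₗ[ℂ] ℂ) (x : TV θ) :
    tensorFun f (counit θ) (S.Δ x) = f x := by
  have h : tensorFun f (counit θ) ∘ₗ S.Δ = f := by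
    refine linearMap_ext_words fun w => ?_
    rw [LinearMap.comp_apply]
    induction w generalizing f with
    | nil =>
      have := counit_word (θ := θ) []
      rw [wordElem_nil] at this ⊢
      simp [S.Δ_one, this]
    | cons i w ih =>
      have h2 : tensorFun f (counit θ) ∘ₗ S.mulB (gen θ i ⊗ₜ 1 + 1 ⊗ₜ gen θ i) =
          tensorFun (f ∘ₗ LinearMap.mulLeft ℂ (gen θ i)) (counit θ) := by
        refine tensor_ext_words fun u v => ?_
        rw [LinearMap.comp_apply, S.mulB_gen_words]
        cases v <;> simp [counit_word, ← wordElem_cons]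
      rw [S.Δ_word_cons, ← LinearMap.comp_apply, h2, ih, wordElem_cons]
      rfl
  exact LinearMap.congr_fun h x

variable {S : BraidedStr θ q} {I : Submodule ℂ (TV θ)}

lemma mem_of_forall_functional {E : Type*} [AddCommGroup E] [Module ℂ E] {p : Submodule ℂ E}
    {x : E} (h : ∀ f : E →ₗ[ℂ] ℂ, (∀ y ∈ p, f y = 0) → f x = 0) : x ∈ p := by
  by_contra hx
  obtain ⟨f, hf, hp⟩ := Submodule.exists_le_ker_of_notMem hx
  exact hf (h f fun y hy => hp hy)

lemma IsPreNicholsIdeal.actR_gen_mem (hI : IsPreNicholsIdeal S I) (i : Fin θ) {x : TV θ}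
    (hx : x ∈ I) : actR q (δ θ i) x ∈ I := by
  refine mem_of_forall_functional fun f hf => ?_
  have h0 := tensorFun_mixedSub (f := genCoeff i) (g := f)
    (fun y hy => hI.coord_eq_zero hy (by simp)) hf (hI.coideal _ (hI.mul_right (gen θ i) x hx))
  have h2 : tensorFun (genCoeff i) f ∘ₗ S.mulB.flip (gen θ i ⊗ₜ 1 + 1 ⊗ₜ gen θ i) =
      tensorFun (counit θ) (f ∘ₗ actR q (δ θ i)) +
        tensorFun (genCoeff i) (f ∘ₗ LinearMap.mulRight ℂ (gen θ i)) := by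
    refine tensor_ext_words fun u v => ?_
    rw [LinearMap.comp_apply, LinearMap.flip_apply, S.mulB_words_gen]
    simp [genCoeff_word, counit_word, actR_word, ← wordElem_concat]
  rw [S.Δ_mul, S.Δ_gen, ← LinearMap.flip_apply, ← LinearMap.comp_apply, h2, LinearMap.add_apply,
    S.counit_left, tensorFun_mixedSub (I := I) (f := genCoeff i)
      (g := f ∘ₗ LinearMap.mulRight ℂ (gen θ i)) (fun y hy => hI.coord_eq_zero hy (by simp))
      (fun y hy => hf _ (hI.mul_right _ _ hy)) (hI.coideal _ hx), add_zero] at h0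
  exact h0

lemma IsPreNicholsIdeal.actL_gen_mem (hI : IsPreNicholsIdeal S I) (i : Fin θ) {x : TV θ}
    (hx : x ∈ I) : actL q (δ θ i) x ∈ I := by
  refine mem_of_forall_functional fun f hf => ?_
  have h0 := tensorFun_mixedSub (f := f) (g := genCoeff i) hf
    (fun y hy => hI.coord_eq_zero hy (by simp)) (hI.coideal _ (hI.mul_left (gen θ i) x hx))
  have h2 : tensorFun f (genCoeff i) ∘ₗ S.mulB (gen θ i ⊗ₜ 1 + 1 ⊗ₜ gen θ i) =
      tensorFun (f ∘ₗ LinearMap.mulLeft ℂ (gen θ i)) (genCoeff i) +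
        tensorFun (f ∘ₗ actL q (δ θ i)) (counit θ) := by
    refine tensor_ext_words fun u v => ?_
    rw [LinearMap.comp_apply, S.mulB_gen_words]
    simp [genCoeff_word, counit_word, actL_word, ← wordElem_cons]
  rw [S.Δ_mul, S.Δ_gen, ← LinearMap.comp_apply, h2, LinearMap.add_apply,
    S.counit_right, tensorFun_mixedSub (I := I) (g := genCoeff i)
      (f := f ∘ₗ LinearMap.mulLeft ℂ (gen θ i))
      (fun y hy => hf _ (hI.mul_left _ _ hy))
      (fun y hy => hI.coord_eq_zero hy (by simp)) (hI.coideal _ hx), zero_add] at h0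
  exact h0

lemma IsPreNicholsIdeal.actL_mem (hI : IsPreNicholsIdeal S I) (w : List (Fin θ)) {x : TV θ}
    (hx : x ∈ I) : actL q (degW θ w) x ∈ I := by
  induction w generalizing x with
  | nil =>
    have : actL q (degW θ []) = LinearMap.id :=
      linearMap_ext_words fun w => by simp [actL_word, degW_nil, qf_zero_left]
    simpa [this]
  | cons i w ih =>
    have : actL q (degW θ (i :: w)) = actL q (degW θ w) ∘ₗ actL q (δ θ i) :=
      linearMap_ext_words fun v => by
        simp [actL_word, degW_cons, qf_add_left, smul_smul]
    rw [this]
    exact ih (hI.actL_gen_mem i hx)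

lemma IsPreNicholsIdeal.actR_mem (hI : IsPreNicholsIdeal S I) (w : List (Fin θ)) {x : TV θ}
    (hx : x ∈ I) : actR q (degW θ w) x ∈ I := by
  induction w generalizing x with
  | nil =>
    have : actR q (degW θ []) = LinearMap.id :=
      linearMap_ext_words fun w => by simp [actR_word, degW_nil, qf_zero_right]
    simpa [this]
  | cons i w ih =>
    have : actR q (degW θ (i :: w)) = actR q (degW θ w) ∘ₗ actR q (δ θ i) :=
      linearMap_ext_words fun v => by
        simp [actR_word, degW_cons, qf_add_right, smul_smul]
    rw [this]
    exact ih (hI.actR_gen_mem i hx)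

lemma tmul_mem_mixedSub_left {a : TV θ} (b : TV θ) (ha : a ∈ I) : a ⊗ₜ[ℂ] b ∈ mixedSub I :=
  Submodule.subset_span (Or.inl ⟨a, b, ha, rfl⟩)

lemma tmul_mem_mixedSub_right (a : TV θ) {b : TV θ} (hb : b ∈ I) : a ⊗ₜ[ℂ] b ∈ mixedSub I :=
  Submodule.subset_span (Or.inr ⟨a, b, hb, rfl⟩)

lemma span_words_eq_top : Submodule.span ℂ (Set.range (wordElem θ)) = ⊤ := by
  rw [← (wordBasis θ).span_eq]
  congr 2
  ext w
  exact (wordBasis_apply w).symm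

/-- A linear map with values in a subspace on words has values in it everywhere. -/
lemma map_mem_of_words {M : Type*} [AddCommGroup M] [Module ℂ M] {f : TV θ →ₗ[ℂ] M}
    {p : Submodule ℂ M} (h : ∀ w, f (wordElem θ w) ∈ p) (x : TV θ) : f x ∈ p := by
  have : Submodule.span ℂ (Set.range (wordElem θ)) ≤ p.comap f := by
    refine Submodule.span_le.2 ?_
    rintro _ ⟨w, rfl⟩
    exact h w
  exact this (span_words_eq_top (θ := θ) ▸ Submodule.mem_top)

lemma IsPreNicholsIdeal.mulB_tmul_mem (hI : IsPreNicholsIdeal S I) {a b : TV θ} (c d : TV θ)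
    (h : a ∈ I ∨ b ∈ I) : S.mulB (a ⊗ₜ b) (c ⊗ₜ d) ∈ mixedSub I := by
  refine map_mem_of_words (f := S.mulB (a ⊗ₜ b) ∘ₗ (TensorProduct.mk ℂ (TV θ) (TV θ)).flip d)
    (fun w => ?_) c
  simp only [LinearMap.comp_apply, LinearMap.flip_apply, TensorProduct.mk_apply,
    S.mulB_word_right]
  rcases h with h | h
  · exact tmul_mem_mixedSub_left _ (hI.mul_right _ _ h)
  · exact tmul_mem_mixedSub_right _ (hI.mul_right _ _ (hI.actR_mem w h))

lemma IsPreNicholsIdeal.tmul_mulB_mem (hI : IsPreNicholsIdeal S I) (a b : TV θ) {c d : TV θ}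
    (h : c ∈ I ∨ d ∈ I) : S.mulB (a ⊗ₜ b) (c ⊗ₜ d) ∈ mixedSub I := by
  refine map_mem_of_words
    (f := S.mulB.flip (c ⊗ₜ d) ∘ₗ (TensorProduct.mk ℂ (TV θ) (TV θ)) a)
    (fun w => ?_) b
  simp only [LinearMap.comp_apply, LinearMap.flip_apply, TensorProduct.mk_apply,
    S.mulB_word_left]
  rcases h with h | h
  · exact tmul_mem_mixedSub_left _ (hI.mul_left _ _ (hI.actL_mem w h))
  · exact tmul_mem_mixedSub_right _ (hI.mul_left _ _ h)

lemma IsPreNicholsIdeal.mulB_mem_left (hI : IsPreNicholsIdeal S I) {X : TV θ ⊗[ℂ] TV θ}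
    (Y : TV θ ⊗[ℂ] TV θ) (hX : X ∈ mixedSub I) : S.mulB X Y ∈ mixedSub I := by
  induction Y using TensorProduct.induction_on with
  | zero => simp
  | add Y Z hY hZ => rw [map_add]; exact add_mem hY hZ
  | tmul c d =>
    have : mixedSub I ≤ (mixedSub I).comap (S.mulB.flip (c ⊗ₜ d)) := by
      refine Submodule.span_le.2 ?_
      rintro _ (⟨a, b, h, rfl⟩ | ⟨a, b, h, rfl⟩)
      · exact hI.mulB_tmul_mem c d (Or.inl h)
      · exact hI.mulB_tmul_mem c d (Or.inr h)
    exact this hX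

lemma IsPreNicholsIdeal.mulB_mem_right (hI : IsPreNicholsIdeal S I) (X : TV θ ⊗[ℂ] TV θ)
    {Y : TV θ ⊗[ℂ] TV θ} (hY : Y ∈ mixedSub I) : S.mulB X Y ∈ mixedSub I := by
  induction X using TensorProduct.induction_on with
  | zero => simp
  | add X Z hX hZ => rw [map_add, LinearMap.add_apply]; exact add_mem hX hZ
  | tmul a b =>
    have : mixedSub I ≤ (mixedSub I).comap (S.mulB (a ⊗ₜ b)) := by
      refine Submodule.span_le.2 ?_
      rintro _ (⟨c, d, h, rfl⟩ | ⟨c, d, h, rfl⟩)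
      · exact hI.tmul_mulB_mem a b (Or.inl h)
      · exact hI.tmul_mulB_mem a b (Or.inr h)
    exact this hY

end Stability

section Grading

variable {θ : ℕ} {q : Fin θ → Fin θ → ℂˣ}

/-- The span of the words of length `< m`. -/
def lowerWords (θ m : ℕ) : Submodule ℂ (TV θ) :=
  Submodule.span ℂ {x | ∃ w : List (Fin θ), w.length < m ∧ x = wordElem θ w}

/-- The projection of `T(V)` to its component of degree `r`. -/
def lenProj (θ r : ℕ) : TV θ →ₗ[ℂ] TV θ :=
  (wordBasis θ).constr ℂ fun w => if w.length = r then wordElem θ w else 0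

lemma lenProj_word (r : ℕ) (w : List (Fin θ)) :
    lenProj θ r (wordElem θ w) = if w.length = r then wordElem θ w else 0 := by
  rw [lenProj, ← wordBasis_apply, Module.Basis.constr_basis, wordBasis_apply]

lemma lenProj_mem (r : ℕ) (x : TV θ) : lenProj θ r x ∈ homogTot θ r := by
  refine map_mem_of_words (fun w => ?_) x
  rw [lenProj_word]
  split_ifs with h
  · exact Submodule.subset_span ⟨w, h, rfl⟩
  · exact zero_mem _

lemma lenProj_homogTot {r : ℕ} {x : TV θ} (hx : x ∈ homogTot θ r) : lenProj θ r x = x := by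
  have h : homogTot θ r ≤ LinearMap.ker (lenProj θ r - LinearMap.id) := by
    refine Submodule.span_le.2 ?_
    rintro _ ⟨w, rfl, rfl⟩
    simp [lenProj_word]
  simpa [sub_eq_zero] using h hx

lemma lenProj_lowerWords {r : ℕ} {x : TV θ} (hx : x ∈ lowerWords θ r) : lenProj θ r x = 0 := by
  have h : lowerWords θ r ≤ LinearMap.ker (lenProj θ r) := by
    refine Submodule.span_le.2 ?_
    rintro _ ⟨w, hw, rfl⟩
    simp [lenProj_word, hw.ne]
  exact h hx

lemma sub_lenProj_mem {r : ℕ} {x : TV θ} (hx : x ∈ Wfil θ r) :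
    x - lenProj θ r x ∈ lowerWords θ r := by
  have h : Wfil θ r ≤ (lowerWords θ r).comap (LinearMap.id - lenProj θ r) := by
    refine Submodule.span_le.2 ?_
    rintro _ ⟨w, hw, rfl⟩
    by_cases h : w.length = r
    · simp [lenProj_word, h]
    · have hw' : wordElem θ w ∈ lowerWords θ r :=
        Submodule.subset_span ⟨w, lt_of_le_of_ne hw h, rfl⟩
      simpa [lenProj_word, h] using hw'
  exact h hx

lemma wordElem_mul_homogTot {m : ℕ} (w : List (Fin θ)) {x : TV θ} (hx : x ∈ homogTot θ m) :
    wordElem θ w * x ∈ homogTot θ (w.length + m) := by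
  have h : homogTot θ m ≤ (homogTot θ (w.length + m)).comap
      (LinearMap.mulLeft ℂ (wordElem θ w)) := by
    refine Submodule.span_le.2 ?_
    rintro _ ⟨v, rfl, rfl⟩
    exact Submodule.subset_span ⟨w ++ v, by simp, (wordElem_append w v).symm⟩
  exact h hx

lemma homogTot_mul_wordElem {m : ℕ} (w : List (Fin θ)) {x : TV θ} (hx : x ∈ homogTot θ m) :
    x * wordElem θ w ∈ homogTot θ (m + w.length) := by
  have h : homogTot θ m ≤ (homogTot θ (m + w.length)).comap
      (LinearMap.mulRight ℂ (wordElem θ w)) := by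
    refine Submodule.span_le.2 ?_
    rintro _ ⟨v, rfl, rfl⟩
    exact Submodule.subset_span ⟨v ++ w, by simp, (wordElem_append v w).symm⟩
  exact h hx

lemma wordElem_mul_lowerWords {m : ℕ} (w : List (Fin θ)) {x : TV θ} (hx : x ∈ lowerWords θ m) :
    wordElem θ w * x ∈ lowerWords θ (w.length + m) := by
  have h : lowerWords θ m ≤ (lowerWords θ (w.length + m)).comap
      (LinearMap.mulLeft ℂ (wordElem θ w)) := by
    refine Submodule.span_le.2 ?_
    rintro _ ⟨v, hv, rfl⟩
    exact Submodule.subset_span ⟨w ++ v, by simpa using hv, (wordElem_append w v).symm⟩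
  exact h hx

lemma lowerWords_mul_wordElem {m : ℕ} (w : List (Fin θ)) {x : TV θ} (hx : x ∈ lowerWords θ m) :
    x * wordElem θ w ∈ lowerWords θ (m + w.length) := by
  have h : lowerWords θ m ≤ (lowerWords θ (m + w.length)).comap
      (LinearMap.mulRight ℂ (wordElem θ w)) := by
    refine Submodule.span_le.2 ?_
    rintro _ ⟨v, hv, rfl⟩
    exact Submodule.subset_span ⟨v ++ w, by simpa using hv, (wordElem_append v w).symm⟩
  exact h hx

/-- The component of total degree `m` of `T(V) ⊗ T(V)`. -/
def homogTensor (θ m : ℕ) : Submodule ℂ (TV θ ⊗[ℂ] TV θ) :=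
  Submodule.span ℂ {X | ∃ u v : List (Fin θ), u.length + v.length = m ∧
    X = wordElem θ u ⊗ₜ wordElem θ v}

lemma BraidedStr.Δ_word_mem (S : BraidedStr θ q) (w : List (Fin θ)) :
    S.Δ (wordElem θ w) ∈ homogTensor θ w.length := by
  induction w with
  | nil =>
    rw [wordElem_nil, S.Δ_one]
    exact Submodule.subset_span ⟨[], [], rfl, rfl⟩
  | cons i w ih =>
    have h : homogTensor θ w.length ≤ (homogTensor θ (i :: w).length).comap
        (S.mulB (gen θ i ⊗ₜ 1 + 1 ⊗ₜ gen θ i)) := by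
      refine Submodule.span_le.2 ?_
      rintro _ ⟨u, v, h, rfl⟩
      simp only [SetLike.mem_coe, Submodule.mem_comap, S.mulB_gen_words]
      refine add_mem (Submodule.subset_span ⟨_, _, ?_, rfl⟩)
        (Submodule.smul_mem _ _ (Submodule.subset_span ⟨_, _, ?_, rfl⟩)) <;>
      simp <;> omega
    rw [S.Δ_word_cons]
    exact h ih

/-- Membership in `I ⊗ T(V) + T(V) ⊗ I` can be tested on functionals vanishing on `I`. -/
lemma mem_mixedSub_of_functionals {L : Submodule ℂ (TV θ)} {X : TV θ ⊗[ℂ] TV θ}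
    (h : ∀ f g : TV θ →ₗ[ℂ] ℂ, (∀ x ∈ L, f x = 0) → (∀ x ∈ L, g x = 0) →
      tensorFun f g X = 0) : X ∈ mixedSub L := by
  obtain ⟨s, hs⟩ := L.mkQ.exists_rightInverse_of_surjective L.range_mkQ
  have hs' : ∀ y, L.mkQ (s y) = y := fun y => LinearMap.congr_fun hs y
  set P : TV θ →ₗ[ℂ] TV θ := s ∘ₗ L.mkQ with hP
  have hP0 : ∀ x ∈ L, P x = 0 := fun x hx => by
    have : L.mkQ x = 0 := by simpa using hx
    rw [hP, LinearMap.comp_apply, this, map_zero]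
  have hPs : ∀ x, x - P x ∈ L := fun x => by
    rw [← Submodule.Quotient.mk_eq_zero, ← Submodule.mkQ_apply, map_sub, hP,
      LinearMap.comp_apply, hs', sub_self]
  have hX : ∀ Y, Y - TensorProduct.map P P Y ∈ mixedSub L := by
    intro Y
    induction Y using TensorProduct.induction_on with
    | zero => simp
    | add Y Z hY hZ =>
      rw [map_add, add_sub_add_comm]
      exact add_mem hY hZ
    | tmul a b =>
      have : a ⊗ₜ[ℂ] b - TensorProduct.map P P (a ⊗ₜ b) = (a - P a) ⊗ₜ b + P a ⊗ₜ (b - P b) := by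
        simp [TensorProduct.sub_tmul, TensorProduct.tmul_sub]
      rw [this]
      exact add_mem (tmul_mem_mixedSub_left _ (hPs a)) (tmul_mem_mixedSub_right _ (hPs b))
  have h0 : TensorProduct.map P P X = 0 := by
    refine ((wordBasis θ).tensorProduct (wordBasis θ)).ext_elem fun ⟨v, w⟩ => ?_
    have e : ∀ Y, ((wordBasis θ).tensorProduct (wordBasis θ)).repr
        (TensorProduct.map P P Y) (v, w) =
        tensorFun ((wordBasis θ).coord v ∘ₗ P) ((wordBasis θ).coord w ∘ₗ P) Y := by
      intro Y
      induction Y using TensorProduct.induction_on with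
      | zero => simp
      | add Y Z hY hZ => simp only [map_add, Finsupp.add_apply, hY, hZ]
      | tmul a b => simp [mul_comm]
    rw [e, h _ _ (fun x hx => by simp [hP0 x hx]) (fun x hx => by simp [hP0 x hx])]
    simp
  simpa [h0] using hX X

end Grading

section Subspace

variable {θ : ℕ} {q : Fin θ → Fin θ → ℂˣ} {n : ℕ}

/-- The braiding matrix of a family of homogeneous elements of degrees `dg`. -/
def subMat (q : Fin θ → Fin θ → ℂˣ) (dg : Fin n → Fin θ → ℕ) : Fin n → Fin n → ℂˣ :=
  fun a b => Units.mk0 (qf q (dg a) (dg b)) (qf_ne_zero _ _)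

lemma qf_subMat_word (dg : Fin n → Fin θ → ℕ) (a : Fin n) (w : List (Fin n)) :
    qf (subMat q dg) (δ n a) (degW n w) = qf q (dg a) (w.map dg).sum := by
  induction w with
  | nil => simp [degW_nil, qf_zero_right]
  | cons b w ih => simp [degW_cons, qf_add_right, ih, qf_delta, subMat]

/-- The algebra map `T(W) → T(V)` sending `x_a` to `y_a`. -/
def subHom (y : Fin n → TV θ) : TV n →ₐ[ℂ] TV θ := FreeAlgebra.lift ℂ y

@[simp] lemma subHom_gen (y : Fin n → TV θ) (a : Fin n) : subHom y (gen n a) = y a := by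
  simp [subHom, gen]

lemma subHom_word_mem {dg : Fin n → Fin θ → ℕ} {y : Fin n → TV θ}
    (hy : ∀ a, y a ∈ homogD θ (dg a)) (w : List (Fin n)) :
    subHom y (wordElem n w) ∈ homogD θ (w.map dg).sum := by
  induction w with
  | nil => simpa [wordElem_nil] using one_mem_homogD
  | cons b w ih => simpa [wordElem_cons] using mul_mem_homogD (hy b) ih

/-- `y` is primitive modulo `I`. -/
def PrimitiveMod (S : BraidedStr θ q) (I : Submodule ℂ (TV θ)) (y : TV θ) : Prop :=
  S.Δ y - (y ⊗ₜ[ℂ] (1 : TV θ) + (1 : TV θ) ⊗ₜ[ℂ] y) ∈ mixedSub I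

variable {S : BraidedStr θ q} {I : Submodule ℂ (TV θ)} {dg : Fin n → Fin θ → ℕ}
  {y : Fin n → TV θ}

lemma mulB_subHom (S' : BraidedStr n (subMat q dg)) (hy : ∀ a, y a ∈ homogD θ (dg a))
    (a : Fin n) (X : TV n ⊗[ℂ] TV n) :
    TensorProduct.map (subHom y).toLinearMap (subHom y).toLinearMap
        (S'.mulB (gen n a ⊗ₜ 1 + 1 ⊗ₜ gen n a) X) =
      S.mulB (y a ⊗ₜ 1 + 1 ⊗ₜ y a)
        (TensorProduct.map (subHom y).toLinearMap (subHom y).toLinearMap X) := by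
  have h : TensorProduct.map (subHom y).toLinearMap (subHom y).toLinearMap ∘ₗ
        S'.mulB (gen n a ⊗ₜ 1 + 1 ⊗ₜ gen n a) =
      S.mulB (y a ⊗ₜ 1 + 1 ⊗ₜ y a) ∘ₗ
        TensorProduct.map (subHom y).toLinearMap (subHom y).toLinearMap := by
    refine tensor_ext_words fun u v => ?_
    rw [LinearMap.comp_apply, S'.mulB_gen_words]
    simp only [LinearMap.comp_apply, map_add, map_smul,
      TensorProduct.map_tmul, AlgHom.toLinearMap_apply, LinearMap.add_apply]
    rw [S.mulB_homog _ _ one_mem_homogD (subHom_word_mem hy u),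
      S.mulB_homog _ _ (hy a) (subHom_word_mem hy u), qf_zero_left, qf_subMat_word]
    simp [wordElem_cons]
  exact LinearMap.congr_fun h X

lemma Δ_subHom (hI : IsPreNicholsIdeal S I) (S' : BraidedStr n (subMat q dg))
    (hy : ∀ a, y a ∈ homogD θ (dg a)) (hp : ∀ a, PrimitiveMod S I (y a)) (x : TV n) :
    S.Δ (subHom y x) - TensorProduct.map (subHom y).toLinearMap (subHom y).toLinearMap (S'.Δ x) ∈
      mixedSub I := by
  refine map_mem_of_words (f := S.Δ ∘ₗ (subHom y).toLinearMap -
    TensorProduct.map (subHom y).toLinearMap (subHom y).toLinearMap ∘ₗ S'.Δ) (fun w => ?_) x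
  simp only [LinearMap.sub_apply, LinearMap.comp_apply, AlgHom.toLinearMap_apply]
  induction w with
  | nil => simp [wordElem_nil, S.Δ_one, S'.Δ_one]
  | cons a w ih =>
    rw [S'.Δ_word_cons, mulB_subHom (S := S) S' hy, wordElem_cons, map_mul, S.Δ_mul, subHom_gen]
    have e : ∀ A B C D : TV θ ⊗[ℂ] TV θ,
        S.mulB A C - S.mulB B D = S.mulB (A - B) C + S.mulB B (C - D) := by
      intro A B C D
      simp only [map_sub, LinearMap.sub_apply]
      abel
    rw [e]
    exact add_mem (hI.mulB_mem_left _ (hp a)) (hI.mulB_mem_right _ ih)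

/-- The ideal of leading terms of the kernel of `T(W) → T(V)/I`. -/
def leadIdeal (I : Submodule ℂ (TV θ)) (y : Fin n → TV θ) : Submodule ℂ (TV n) :=
  Submodule.span ℂ {x | ∃ m, x ∈ homogTot n m ∧ ∃ z ∈ lowerWords n m, subHom y (x + z) ∈ I}

lemma lenProj_mem_leadIdeal {r : ℕ} {x : TV n} (hx : x ∈ Wfil n r) (h : subHom y x ∈ I) :
    lenProj n r x ∈ leadIdeal I y :=
  Submodule.subset_span ⟨r, lenProj_mem r x, x - lenProj n r x, sub_lenProj_mem hx, by simpa⟩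

lemma exists_functional (r : ℕ) {f : TV n →ₗ[ℂ] ℂ} (hf : ∀ x ∈ leadIdeal I y, f x = 0) :
    ∃ F : TV θ →ₗ[ℂ] ℂ, (∀ x ∈ I, F x = 0) ∧
      ∀ x ∈ Wfil n r, F (subHom y x) = f (lenProj n r x) := by
  let ψ : Wfil n r →ₗ[ℂ] TV θ ⧸ I := I.mkQ ∘ₗ (subHom y).toLinearMap ∘ₗ (Wfil n r).subtype
  let g : Module.Dual ℂ (Wfil n r) := f ∘ₗ lenProj n r ∘ₗ (Wfil n r).subtype
  have hg : g ∈ (LinearMap.ker ψ).dualAnnihilator := by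
    rw [Submodule.mem_dualAnnihilator]
    rintro ⟨x, hx⟩ h
    refine hf _ (lenProj_mem_leadIdeal hx ?_)
    simpa [ψ] using h
  rw [← LinearMap.range_dualMap_eq_dualAnnihilator_ker] at hg
  obtain ⟨F, hF⟩ := hg
  refine ⟨F ∘ₗ I.mkQ, fun x hx => ?_, fun x hx => ?_⟩
  · have : I.mkQ x = 0 := by simpa using hx
    rw [LinearMap.comp_apply, this, map_zero]
  · exact LinearMap.congr_fun hF ⟨x, hx⟩

lemma wordElem_mem_Wfil {w : List (Fin n)} {r : ℕ} (h : w.length ≤ r) :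
    wordElem n w ∈ Wfil n r := Submodule.subset_span ⟨w, h, rfl⟩

lemma tensorFun_eq_of_words {f g f' g' : TV n →ₗ[ℂ] ℂ} {m : ℕ}
    (h : ∀ u v : List (Fin n), u.length + v.length = m →
      f (wordElem n u) * g (wordElem n v) = f' (wordElem n u) * g' (wordElem n v))
    {X : TV n ⊗[ℂ] TV n} (hX : X ∈ homogTensor n m) : tensorFun f g X = tensorFun f' g' X := by
  have : homogTensor n m ≤ LinearMap.ker (tensorFun f g - tensorFun f' g') := by
    refine Submodule.span_le.2 ?_
    rintro _ ⟨u, v, huv, rfl⟩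
    simp [h u v huv]
  simpa [sub_eq_zero] using this hX

lemma Δ_mem_homogTensor (S' : BraidedStr n (subMat q dg)) {m : ℕ} {x : TV n}
    (hx : x ∈ homogTot n m) : S'.Δ x ∈ homogTensor n m := by
  have h : homogTot n m ≤ (homogTensor n m).comap S'.Δ := by
    refine Submodule.span_le.2 ?_
    rintro _ ⟨w, rfl, rfl⟩
    exact S'.Δ_word_mem w
  exact h hx

lemma leadIdeal_coideal (hI : IsPreNicholsIdeal S I) (S' : BraidedStr n (subMat q dg))
    (hy : ∀ a, y a ∈ homogD θ (dg a)) (hp : ∀ a, PrimitiveMod S I (y a)) {x : TV n}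
    (hx : x ∈ leadIdeal I y) : S'.Δ x ∈ mixedSub (leadIdeal I y) := by
  suffices h : leadIdeal I y ≤ (mixedSub (leadIdeal I y)).comap S'.Δ from h hx
  refine Submodule.span_le.2 ?_
  rintro x ⟨m, hxm, z, hz, hxz⟩
  refine mem_mixedSub_of_functionals fun f g hf hg => ?_
  have hsum : ∀ X ∈ homogTensor n m, tensorFun f g X =
      ∑ r ∈ Finset.range (m + 1), tensorFun (f ∘ₗ lenProj n r) (g ∘ₗ lenProj n (m - r)) X := by
    intro X hX
    have : homogTensor n m ≤ LinearMap.ker (tensorFun f g -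
        ∑ r ∈ Finset.range (m + 1), tensorFun (f ∘ₗ lenProj n r) (g ∘ₗ lenProj n (m - r))) := by
      refine Submodule.span_le.2 ?_
      rintro _ ⟨u, v, huv, rfl⟩
      simp only [SetLike.mem_coe, LinearMap.mem_ker, LinearMap.sub_apply, LinearMap.sum_apply,
        tensorFun_tmul, LinearMap.comp_apply, lenProj_word]
      rw [Finset.sum_eq_single u.length]
      · have : v.length = m - u.length := by omega
        simp [this]
      · intro r _ hr
        simp [hr.symm]
      · intro h
        exact absurd (Finset.mem_range.2 (by omega)) h
    simpa [sub_eq_zero] using this hX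
  rw [hsum _ (Δ_mem_homogTensor S' hxm)]
  refine Finset.sum_eq_zero fun r hr => ?_
  have hr : r ≤ m := Nat.lt_succ_iff.1 (Finset.mem_range.1 hr)
  obtain ⟨F, hF0, hF⟩ := exists_functional (I := I) (y := y) r hf
  obtain ⟨G, hG0, hG⟩ := exists_functional (I := I) (y := y) (m - r) hg
  have hFs : ∀ w : List (Fin n), w.length < r → F (subHom y (wordElem n w)) = 0 := by
    intro w hw
    rw [hF _ (wordElem_mem_Wfil hw.le), lenProj_word, if_neg hw.ne, map_zero]
  have hGs : ∀ w : List (Fin n), w.length < m - r → G (subHom y (wordElem n w)) = 0 := by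
    intro w hw
    rw [hG _ (wordElem_mem_Wfil hw.le), lenProj_word, if_neg hw.ne, map_zero]
  let F' := F ∘ₗ (subHom y).toLinearMap
  let G' := G ∘ₗ (subHom y).toLinearMap
  have h1 : tensorFun F' G' (S'.Δ (x + z)) = 0 := by
    have e : ∀ X, tensorFun F' G' X = tensorFun F G
        (TensorProduct.map (subHom y).toLinearMap (subHom y).toLinearMap X) := by
      intro X
      rw [← LinearMap.comp_apply]
      congr 1
      exact tensor_ext_words fun u v => by simp [F', G']
    have h2 := tensorFun_mixedSub hF0 hG0 (Δ_subHom hI S' hy hp (x + z))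
    rw [map_sub, tensorFun_mixedSub hF0 hG0 (hI.coideal _ hxz), zero_sub, neg_eq_zero] at h2
    rw [e, h2]
  have h2 : tensorFun F' G' (S'.Δ z) = 0 := by
    have : lowerWords n m ≤ LinearMap.ker (tensorFun F' G' ∘ₗ S'.Δ) := by
      refine Submodule.span_le.2 ?_
      rintro _ ⟨w, hw, rfl⟩
      rw [SetLike.mem_coe, LinearMap.mem_ker, LinearMap.comp_apply,
        tensorFun_eq_of_words (f' := 0) (g' := 0) _ (S'.Δ_word_mem w)]
      · induction S'.Δ (wordElem n w) using TensorProduct.induction_on with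
        | zero => simp
        | tmul a b => simp
        | add a b ha hb => simp [ha, hb]
      · intro u v huv
        rcases lt_or_ge u.length r with h | h
        · simp [F', hFs u h]
        · simp [G', hGs v (by omega)]
    exact this hz
  rw [← tensorFun_eq_of_words (f := F') (g := G') _ (Δ_mem_homogTensor S' hxm)]
  · rw [map_add, map_add, h2, add_zero] at h1
    exact h1
  · intro u v huv
    rcases lt_trichotomy u.length r with h | h | h
    · simp [F', hFs u h, lenProj_word, h.ne]
    · simp [F', G', hF _ (wordElem_mem_Wfil h.le),
        hG _ (wordElem_mem_Wfil (show v.length ≤ m - r by omega))]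
    · have : v.length < m - r := by omega
      simp [G', hGs v this, lenProj_word, this.ne]

lemma exists_of_mem_Wfil_one {u : TV n} (hu : u ∈ Wfil n 1) :
    ∃ (c₀ : ℂ) (c : Fin n → ℂ), u = c₀ • 1 + ∑ a, c a • gen n a := by
  induction hu using Submodule.span_induction with
  | mem x hx =>
    obtain ⟨w, hw, rfl⟩ := hx
    match w, hw with
    | [], _ => exact ⟨1, 0, by simp [wordElem_nil]⟩
    | [a], _ =>
      refine ⟨0, Pi.single a 1, ?_⟩
      rw [wordElem_singleton, Finset.sum_eq_single a] <;> simp +contextual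
  | zero => exact ⟨0, 0, by simp⟩
  | add x y _ _ hx hy =>
    obtain ⟨c₀, c, rfl⟩ := hx
    obtain ⟨d₀, d, rfl⟩ := hy
    refine ⟨c₀ + d₀, c + d, ?_⟩
    simp only [add_smul, Pi.add_apply, Finset.sum_add_distrib]
    abel
  | smul s x _ hx =>
    obtain ⟨c₀, c, rfl⟩ := hx
    exact ⟨s * c₀, s • c, by simp [Finset.smul_sum, smul_smul]⟩

lemma homogTot_le_Wfil {m r : ℕ} (h : m ≤ r) : homogTot n m ≤ Wfil n r :=
  Submodule.span_mono fun _ ⟨w, hw, e⟩ => ⟨w, hw.trans_le h, e⟩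

lemma lowerWords_le_Wfil {m r : ℕ} (h : m ≤ r) : lowerWords n m ≤ Wfil n r :=
  Submodule.span_mono fun _ ⟨w, hw, e⟩ => ⟨w, hw.le.trans h, e⟩

lemma leadIdeal_isPreNichols (hI : IsPreNicholsIdeal S I) (S' : BraidedStr n (subMat q dg))
    (hy : ∀ a, y a ∈ homogD θ (dg a)) (hp : ∀ a, PrimitiveMod S I (y a))
    (hind : ∀ (c₀ : ℂ) (c : Fin n → ℂ), c₀ • 1 + ∑ a, c a • y a ∈ I → c₀ = 0 ∧ c = 0) :
    IsPreNicholsIdeal S' (leadIdeal I y) where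
  mul_left a x hx := by
    refine map_mem_of_words (f := LinearMap.mulRight ℂ x) (fun w => ?_) a
    have h : leadIdeal I y ≤ (leadIdeal I y).comap (LinearMap.mulLeft ℂ (wordElem n w)) := by
      refine Submodule.span_le.2 ?_
      rintro x ⟨m, hxm, z, hz, hxz⟩
      refine Submodule.subset_span ⟨_, wordElem_mul_homogTot w hxm, _,
        wordElem_mul_lowerWords w hz, ?_⟩
      rw [LinearMap.mulLeft_apply, ← mul_add, map_mul]
      exact hI.mul_left _ _ hxz
    exact h hx
  mul_right a x hx := by
    refine map_mem_of_words (f := LinearMap.mulLeft ℂ x) (fun w => ?_) a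
    have h : leadIdeal I y ≤ (leadIdeal I y).comap (LinearMap.mulRight ℂ (wordElem n w)) := by
      refine Submodule.span_le.2 ?_
      rintro x ⟨m, hxm, z, hz, hxz⟩
      refine Submodule.subset_span ⟨_, homogTot_mul_wordElem w hxm, _,
        lowerWords_mul_wordElem w hz, ?_⟩
      rw [LinearMap.mulRight_apply, ← add_mul, map_mul]
      exact hI.mul_right _ _ hxz
    exact h hx
  homog_ge2 := by
    refine le_antisymm (Submodule.span_le.2 ?_) (Submodule.span_le.2 fun x hx => hx.1)
    rintro x ⟨m, hxm, z, hz, hxz⟩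
    have hx : x ∈ leadIdeal I y := Submodule.subset_span ⟨m, hxm, z, hz, hxz⟩
    rcases lt_or_ge m 2 with h | h
    · obtain ⟨c₀, c, hc⟩ := exists_of_mem_Wfil_one (u := x + z)
        (add_mem (homogTot_le_Wfil (by omega) hxm) (lowerWords_le_Wfil (by omega) hz))
      rw [hc] at hxz
      obtain ⟨rfl, rfl⟩ := hind c₀ c (by simpa using hxz)
      have h0 : lenProj n m (x + z) = 0 := by simp [hc]
      rw [map_add, lenProj_homogTot hxm, lenProj_lowerWords hz, add_zero] at h0
      rw [h0]
      exact zero_mem _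
    · exact Submodule.subset_span ⟨hx, m, h, hxm⟩
  coideal x hx := leadIdeal_coideal hI S' hy hp hx

lemma Wfil_mono {a b : ℕ} (h : a ≤ b) : Wfil θ a ≤ Wfil θ b :=
  Submodule.span_mono fun _ ⟨w, hw, e⟩ => ⟨w, hw.trans h, e⟩

lemma mul_mem_Wfil {a b : ℕ} {x y : TV θ} (hx : x ∈ Wfil θ a) (hy : y ∈ Wfil θ b) :
    x * y ∈ Wfil θ (a + b) := by
  have h := Submodule.mul_mem_mul hx hy
  rw [Wfil, Wfil, Submodule.span_mul_span] at h
  refine Submodule.span_mono ?_ h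
  rintro _ ⟨_, ⟨v, hv, rfl⟩, _, ⟨w, hw, rfl⟩, rfl⟩
  exact ⟨v ++ w, by simpa using add_le_add hv hw, (wordElem_append v w).symm⟩

lemma length_eq_sum_degW (w : List (Fin θ)) : w.length = ∑ t, degW θ w t := by
  induction w with
  | nil => simp [degW_nil]
  | cons i w ih => simp [degW_cons, Finset.sum_add_distrib, ← ih, δ, add_comm]

lemma homogD_le_Wfil (d : Fin θ → ℕ) : homogD θ d ≤ Wfil θ (∑ t, d t) := by
  refine Submodule.span_mono ?_
  rintro _ ⟨w, rfl, rfl⟩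
  exact ⟨w, (length_eq_sum_degW w).le, rfl⟩

lemma subHom_word_mem_Wfil (hy : ∀ a, y a ∈ homogD θ (dg a)) (w : List (Fin n)) :
    subHom y (wordElem n w) ∈ Wfil θ ((∑ a, ∑ t, dg a t) * w.length) := by
  induction w with
  | nil => simpa [wordElem_nil] using wordElem_mem_Wfil (n := θ) (w := []) (r := 0) le_rfl
  | cons a w ih =>
    rw [wordElem_cons, map_mul, subHom_gen, List.length_cons, mul_add, mul_one, add_comm]
    refine mul_mem_Wfil (Wfil_mono ?_ (homogD_le_Wfil _ (hy a))) ih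
    exact Finset.single_le_sum (f := fun a => ∑ t, dg a t) (fun _ _ => Nat.zero_le _)
      (Finset.mem_univ a)

instance finite_Wfil (r : ℕ) : Module.Finite ℂ (Wfil θ r) := by
  have : {x | ∃ w : List (Fin θ), w.length ≤ r ∧ x = wordElem θ w}.Finite :=
    ((List.finite_length_le (Fin θ) r).image (wordElem θ)).subset
      (by rintro _ ⟨w, hw, rfl⟩; exact ⟨w, hw, rfl⟩)
  exact FiniteDimensional.span_of_finite ℂ this

lemma linearIndependent_subHom {J : Submodule ℂ (TV n)} (hJ : leadIdeal I y ≤ J)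
    {κ : Type*} (a : κ → List (Fin n))
    (h : LinearIndependent ℂ fun k => J.mkQ (wordElem n (a k))) :
    LinearIndependent ℂ fun k => I.mkQ (subHom y (wordElem n (a k))) := by
  classical
  rw [linearIndependent_iff'] at h ⊢
  intro s c hc
  have key : ∀ d M, (∀ k ∈ s, (a k).length < M + d) → ∀ k ∈ s, M ≤ (a k).length → c k = 0 := by
    intro d
    induction d with
    | zero => intro M hM k hk h'; exact absurd (hM k hk) (by omega)
    | succ d ih =>
      intro M hM
      have hM1 := ih (M + 1) (fun k hk => by have := hM k hk; omega)
      have hx : ∑ k ∈ s, c k • wordElem n (a k) ∈ Wfil n M := by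
        refine Submodule.sum_mem _ fun k hk => ?_
        by_cases hkM : (a k).length ≤ M
        · exact Submodule.smul_mem _ _ (wordElem_mem_Wfil hkM)
        · rw [hM1 k hk (by omega), zero_smul]
          exact zero_mem _
      have hxI : subHom y (∑ k ∈ s, c k • wordElem n (a k)) ∈ I := by
        rw [← Submodule.Quotient.mk_eq_zero, ← Submodule.mkQ_apply]
        simpa using hc
      have hJx := hJ (lenProj_mem_leadIdeal hx hxI)
      rw [map_sum] at hJx
      have h0 := h (s.filter fun k => (a k).length = M) c (by
        rw [Finset.sum_filter]
        rw [← Submodule.Quotient.mk_eq_zero, ← Submodule.mkQ_apply, map_sum] at hJx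
        refine Eq.trans ?_ hJx
        refine Finset.sum_congr rfl fun k _ => ?_
        simp only [map_smul, lenProj_word]
        split_ifs <;> simp)
      intro k hk hkM
      rcases hkM.eq_or_lt with e | e
      · exact h0 k (Finset.mem_filter.2 ⟨hk, e.symm⟩)
      · exact hM1 k hk e
  intro k hk
  refine key (s.sup (fun k => (a k).length) + 1) 0 (fun k hk => ?_) k hk (Nat.zero_le _)
  have : (a k).length ≤ _ := Finset.le_sup (f := fun k => (a k).length) hk
  omega

/-- If `T(V)/I` has finite GK dimension, then the braiding matrix of a family of homogeneous
elements that are primitive and linearly independent modulo `I` has finite root system. -/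
theorem finiteRootSystem_subMat (hAAH : AAH) (hI : IsPreNicholsIdeal S I) (hGK : FinGK I)
    (hy : ∀ a, y a ∈ homogD θ (dg a)) (hp : ∀ a, PrimitiveMod S I (y a))
    (hind : ∀ (c₀ : ℂ) (c : Fin n → ℂ), c₀ • 1 + ∑ a, c a • y a ∈ I → c₀ = 0 ∧ c = 0) :
    FiniteRootSystem (subMat q dg) := by
  let S' := braidedStr (subMat q dg)
  refine hAAH n _ S' ?_
  have hJ : leadIdeal I y ≤ Jq S' := le_sSup (leadIdeal_isPreNichols hI S' hy hp hind)
  obtain ⟨C, d, hC⟩ := hGK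
  set D := ∑ a, ∑ t, dg a t
  refine ⟨C * (D + 1) ^ d, d, fun N => ?_⟩
  let v : {w : List (Fin n) // w.length ≤ N} → TV n ⧸ Jq S' := fun w => (Jq S').mkQ (wordElem n w)
  obtain ⟨κ, a, ha, hspan, hli⟩ := exists_linearIndependent' ℂ v
  have : Finite {w : List (Fin n) // w.length ≤ N} := List.finite_length_le (Fin n) N
  have : Finite κ := Finite.of_injective a ha
  have := Fintype.ofFinite κ
  have hmap : (Wfil n N).map (Jq S').mkQ = Submodule.span ℂ (Set.range v) := by
    rw [Wfil, Submodule.map_span]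
    congr 1
    ext x
    constructor
    · rintro ⟨_, ⟨w, hw, rfl⟩, rfl⟩
      exact ⟨⟨w, hw⟩, rfl⟩
    · rintro ⟨⟨w, hw⟩, rfl⟩
      exact ⟨_, ⟨w, hw, rfl⟩, rfl⟩
  rw [hmap, ← hspan, finrank_span_eq_card hli]
  have hli2 := linearIndependent_subHom (I := I) (y := y) hJ (fun k => (a k).1) hli
  let M := (Wfil θ (D * N)).map I.mkQ
  have hM : ∀ k, I.mkQ (subHom y (wordElem n (a k).1)) ∈ M := fun k =>
    Submodule.mem_map_of_mem (Wfil_mono (Nat.mul_le_mul_left D (a k).2)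
      (subHom_word_mem_Wfil hy _))
  have hli3 : LinearIndependent ℂ fun k =>
      (⟨I.mkQ (subHom y (wordElem n (a k).1)), hM k⟩ : M) :=
    LinearIndependent.of_comp M.subtype hli2
  calc Fintype.card κ ≤ Module.finrank ℂ M := hli3.fintype_card_le_finrank
    _ ≤ C * (D * N + 1) ^ d := hC _
    _ ≤ C * ((D + 1) * (N + 1)) ^ d := by gcongr; nlinarith
    _ = C * (D + 1) ^ d * (N + 1) ^ d := by rw [mul_pow, mul_assoc]

end Subspace

section RootSystem

variable {n : ℕ} {q : Fin n → Fin n → ℂˣ}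

/-- The braiding matrix obtained by successive reflections. -/
def reflPath : List (Fin n) → (Fin n → Fin n → ℂˣ) → Fin n → Fin n → ℂˣ
  | [], q => q
  | i :: w, q => reflPath w (reflectMat q i)

/-- The composition of the reflections of `ℤ^n` along a path. -/
def sPath : List (Fin n) → (Fin n → Fin n → ℂˣ) → (Fin n → ℤ) → Fin n → ℤ
  | [], _, v => v
  | i :: w, q, v => sPath w (reflectMat q i) (sRefl q i v)

lemma sPath_append (v w : List (Fin n)) (q : Fin n → Fin n → ℂˣ) (β : Fin n → ℤ) :
    sPath (v ++ w) q β = sPath w (reflPath v q) (sPath v q β) := by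
  induction v generalizing q β with
  | nil => rfl
  | cons i v ih => exact ih _ _

lemma sRefl_add (i : Fin n) (u v : Fin n → ℤ) : sRefl q i (u + v) = sRefl q i u + sRefl q i v := by
  ext k
  by_cases h : k = i
  · simp only [sRefl, h, if_true, Pi.add_apply, mul_add, Finset.sum_add_distrib]; ring
  · simp [sRefl, h]

lemma sRefl_smul (i : Fin n) (c : ℤ) (v : Fin n → ℤ) : sRefl q i (c • v) = c • sRefl q i v := by
  ext k
  by_cases h : k = i
  · simp only [sRefl, h, if_true, Pi.smul_apply, smul_eq_mul, mul_sub, Finset.mul_sum]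
    congr 1
    exact Finset.sum_congr rfl fun _ _ => by ring
  · simp [sRefl, h]

lemma sRefl_sRefl (i : Fin n) (v : Fin n → ℤ) : sRefl q i (sRefl q i v) = v := by
  have hs : ∑ j, cij q i j * sRefl q i v j = -∑ j, cij q i j * v j := by
    have : ∀ j, cij q i j * sRefl q i v j =
        cij q i j * v j - (if j = i then 2 * ∑ k, cij q i k * v k else 0) := by
      intro j
      by_cases h : j = i
      · subst h
        simp only [sRefl, if_true, mul_sub]
        simp [cij]
      · simp [sRefl, h]
    simp only [this, Finset.sum_sub_distrib, Finset.sum_ite_eq', Finset.mem_univ, if_true]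
    ring
  ext k
  by_cases h : k = i
  · subst h
    rw [sRefl, hs]
    simp [sRefl]
  · simp [sRefl, h]

lemma sPath_add (w : List (Fin n)) (u v : Fin n → ℤ) :
    sPath w q (u + v) = sPath w q u + sPath w q v := by
  induction w generalizing q u v with
  | nil => rfl
  | cons i w ih => simp [sPath, sRefl_add, ih]

lemma sPath_smul (w : List (Fin n)) (c : ℤ) (v : Fin n → ℤ) :
    sPath w q (c • v) = c • sPath w q v := by
  induction w generalizing q v with
  | nil => rfl
  | cons i w ih => rw [sPath, sPath, sRefl_smul, ih]

/-- All reflections are defined, and every vector has finite orbit. -/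
def GoodMat (q : Fin n → Fin n → ℂˣ) : Prop :=
  (∀ w i, reflectable (reflPath w q) i) ∧ ∀ v, (Set.range fun w => sPath w q v).Finite

lemma reachRoot_path {q₀ : Fin n → Fin n → ℂˣ} {β : Fin n → ℤ} (h : ReachRoot q₀ q β)
    (w : List (Fin n)) : ReachRoot q₀ (reflPath w q) (sPath w q β) := by
  induction w generalizing q β with
  | nil => exact h
  | cons i w ih => exact ih (h.reflect i)

lemma FiniteRootSystem.goodMat (h : FiniteRootSystem q) : GoodMat q := by
  refine ⟨fun w i => h.1 _ i ⟨_, reachRoot_path (.simple i) w⟩, fun v => ?_⟩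
  have hfin := Set.Finite.pi' (fun _ : Fin n => h.2)
  refine (hfin.image fun f : Fin n → Fin n → ℤ => ∑ j, v j • f j).subset ?_
  rintro _ ⟨w, rfl⟩
  refine ⟨fun j => sPath w q (fun k => if k = j then 1 else 0), fun j =>
    ⟨_, reachRoot_path (.simple j) w⟩, ?_⟩
  let f : (Fin n → ℤ) →ₗ[ℤ] (Fin n → ℤ) :=
    { toFun := sPath w q, map_add' := sPath_add w, map_smul' := sPath_smul w }
  have hv : v = ∑ j, v j • (fun k : Fin n => if k = j then (1 : ℤ) else 0) := by
    ext k; simp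
  change ∑ j, v j • f _ = f v
  conv_rhs => rw [hv, map_sum]
  simp only [map_smul]

lemma GoodMat.reflect (h : GoodMat q) (i : Fin n) : GoodMat (reflectMat q i) := by
  refine ⟨fun w => h.1 (i :: w), fun v => (h.2 (sRefl q i v)).subset ?_⟩
  rintro _ ⟨w, rfl⟩
  exact ⟨i :: w, by simp [sPath, sRefl_sRefl]⟩

lemma qnum_mul_sub_one (t : ℂ) (m : ℕ) : qnum t m * (t - 1) = t ^ m - 1 := by
  rw [qnum, geom_sum_mul]

/-- A vertex labelled `1` cannot have neighbours. -/
lemma GoodMat.false_of_one (h : GoodMat q) {a b : Fin n} (hab : a ≠ b) (ha : (q a a : ℂ) = 1)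
    (he : qtil q a b ≠ 1) : False := by
  obtain ⟨m, hm⟩ := h.1 [] a b hab.symm
  simp only [reflPath, cSet, Set.mem_ofPred_eq, ha, qnum, one_pow, one_mul, mul_eq_zero] at hm
  rcases hm with hm | hm
  · simp at hm
    exact absurd hm (by exact_mod_cast Nat.succ_ne_zero m)
  · exact he (sub_eq_zero.1 hm).symm

/-- `m` is the least natural number with `t ^ m * e = 1`. -/
def MinExp (t e : ℂ) (m : ℕ) : Prop := t ^ m * e = 1 ∧ ∀ k < m, t ^ k * e ≠ 1

lemma exists_minExp {t e : ℂ} {m : ℕ} (h : t ^ m * e = 1) : ∃ k ≤ m, MinExp t e k := by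
  classical
  have hex : ∃ k, t ^ k * e = 1 := ⟨m, h⟩
  exact ⟨Nat.find hex, Nat.find_min' hex h, Nat.find_spec hex, fun k hk => Nat.find_min hex hk⟩

lemma sInf_cSet_of_minExp {a b : Fin n} {m : ℕ} (h : MinExp (q a a) (qtil q a b) m) :
    sInf (cSet q a b) = m := by
  refine le_antisymm (Nat.sInf_le (by simp [cSet, h.1])) (le_csInf ⟨m, by simp [cSet, h.1]⟩ ?_)
  intro k hk
  by_contra! hlt
  simp only [cSet, Set.mem_ofPred_eq, mul_eq_zero] at hk
  rcases hk with hk | hk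
  · have h1 : (q a a : ℂ) ^ (k + 1) = 1 := by
      have := qnum_mul_sub_one (q a a : ℂ) (k + 1)
      rw [hk, zero_mul] at this
      exact (sub_eq_zero.1 this.symm)
    refine h.2 (m - (k + 1)) (by omega) ?_
    have h2 := h.1
    rwa [← Nat.sub_add_cancel (show k + 1 ≤ m by omega), pow_add, h1, mul_one] at h2
  · exact h.2 k hlt (sub_eq_zero.1 hk).symm

lemma qtil_comm (a b : Fin n) : qtil q a b = qtil q b a := mul_comm _ _

lemma coe_reflectMat (i a b : Fin n) : (reflectMat q i a b : ℂ) =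
    q a b * (q a i : ℂ) ^ (-(cij q i b)) * (q i b : ℂ) ^ (-(cij q i a)) *
      (q i i : ℂ) ^ (cij q i a * cij q i b) := by
  simp [reflectMat]

lemma reflectMat_diag (i a : Fin n) : (reflectMat q i a a : ℂ) =
    q a a * qtil q i a ^ (-(cij q i a)) * (q i i : ℂ) ^ (cij q i a * cij q i a) := by
  rw [coe_reflectMat, qtil, mul_zpow]; ring

lemma qtil_reflectMat (i a b : Fin n) : qtil (reflectMat q i) a b =
    qtil q a b * qtil q i a ^ (-(cij q i b)) * qtil q i b ^ (-(cij q i a)) *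
      (q i i : ℂ) ^ (2 * (cij q i a * cij q i b)) := by
  rw [qtil, coe_reflectMat, coe_reflectMat, qtil, qtil, qtil, mul_zpow, mul_zpow, two_mul,
    zpow_add₀ (Units.ne_zero _), mul_comm (cij q i b) (cij q i a)]
  ring

lemma cij_self (i : Fin n) : cij q i i = 2 := by simp [cij]

lemma cij_of_minExp {a b : Fin n} (hab : a ≠ b) {m : ℕ} (h : MinExp (q a a) (qtil q a b) m) :
    cij q a b = -m := by
  simp [cij, hab, sInf_cSet_of_minExp h]

lemma reflectMat_diag_self (i : Fin n) : (reflectMat q i i i : ℂ) = q i i := by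
  have h := Units.ne_zero (q i i)
  rw [reflectMat_diag, cij_self, qtil]
  field_simp
  norm_num

/-- The rank two data of a Cartan pair are preserved by the reflection at one of its vertices. -/
lemma reflect_cartan {a b : Fin n} (hab : a ≠ b) {m k : ℕ}
    (h : MinExp (q a a) (qtil q a b) m) (h' : MinExp (q b b) (qtil q b a) k) :
    MinExp (reflectMat q a a a) (qtil (reflectMat q a) a b) m ∧
      MinExp (reflectMat q a b b) (qtil (reflectMat q a) b a) k := by
  have ha := Units.ne_zero (q a a)
  have hc := cij_of_minExp hab h
  have e : (q a a : ℂ) ^ m * qtil q a b = 1 := h.1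
  have e' : qtil q a b = ((q a a : ℂ) ^ m)⁻¹ := eq_inv_of_mul_eq_one_right e
  have h1 : (reflectMat q a b b : ℂ) = q b b := by
    rw [reflectMat_diag, hc, e', neg_neg, neg_mul_neg, zpow_mul, zpow_natCast, zpow_natCast,
      zpow_natCast, inv_pow, mul_assoc, inv_mul_cancel₀ (pow_ne_zero _ (pow_ne_zero _ ha)), mul_one]
  have h2 : qtil (reflectMat q a) a b = qtil q a b := by
    rw [qtil_reflectMat, hc, cij_self, neg_neg, e']
    have : qtil q a a = (q a a : ℂ) ^ 2 := by rw [qtil, sq]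
    rw [this]
    have h3 : (2 : ℤ) * (2 * -(m : ℤ)) = -((m * 4 : ℕ) : ℤ) := by push_cast; ring
    rw [h3, zpow_neg, zpow_neg, zpow_natCast, zpow_natCast, inv_zpow, inv_inv]
    have h4 : (((q a a : ℂ) ^ m) ^ (2 : ℤ)) = (q a a : ℂ) ^ (m * 2) := by
      rw [pow_mul]; norm_cast
    rw [h4, ← pow_mul, mul_comm 2 m]
    have : (q a a : ℂ) ^ (m * 4) = (q a a : ℂ) ^ (m * 2) * (q a a : ℂ) ^ (m * 2) := by
      rw [← pow_add]; congr 1; ring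
    rw [this]
    field_simp
  rw [reflectMat_diag_self, h1, h2, qtil_comm b a, h2, qtil_comm a b]
  exact ⟨qtil_comm a b ▸ h, h'⟩

lemma sRefl_support {a b : Fin n} (hab : a ≠ b) {k : ℕ}
    (h : MinExp (q b b) (qtil q b a) k) {v : Fin n → ℤ} (hv : ∀ c, c ≠ a → c ≠ b → v c = 0) :
    sRefl q b v b = k * v a - v b := by
  have : ∑ j, cij q b j * v j = 2 * v b - k * v a := by
    rw [← Finset.sum_subset (Finset.subset_univ {a, b})]
    · rw [Finset.sum_pair hab, cij_self, cij_of_minExp hab.symm h]; ring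
    · intro c _ hc
      simp only [Finset.mem_insert, Finset.mem_singleton, not_or] at hc
      rw [hv c hc.1 hc.2, mul_zero]
  rw [sRefl, if_pos rfl, this]; ring

lemma exists_sPath_large (N : ℕ) {a b : Fin n} (hab : a ≠ b) {m k : ℕ}
    (h : MinExp (q a a) (qtil q a b) m) (h' : MinExp (q b b) (qtil q b a) k) (hmk : 4 ≤ m * k)
    {v : Fin n → ℤ} (hv : ∀ c, c ≠ a → c ≠ b → v c = 0) (hpos : 0 < v a)
    (hlt : 2 * v b < k * v a) :
    ∃ w, v a + v b + N ≤ sPath w q v a + sPath w q v b := by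
  induction N generalizing q a b m k v with
  | zero => exact ⟨[], by simp [sPath]⟩
  | succ N ih =>
    obtain ⟨g', g⟩ := reflect_cartan hab.symm h' h
    have e := sRefl_support hab h' hv
    have ea : sRefl q b v a = v a := by simp [sRefl, hab]
    have hmk' : (4 : ℤ) ≤ m * k := by exact_mod_cast hmk
    have hm : (0 : ℤ) < m := by
      rcases Nat.eq_zero_or_pos m with rfl | h0
      · simp at hmk
      · exact_mod_cast h0
    have hk : (0 : ℤ) < k := by
      rcases Nat.eq_zero_or_pos k with rfl | h0
      · simp at hmk
      · exact_mod_cast h0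
    have hk1 : v a ≤ k * v a := le_mul_of_one_le_left hpos.le hk
    obtain ⟨w, hw⟩ := ih hab.symm g' g (by rwa [mul_comm]) (v := sRefl q b v)
      (fun c hc hc' => by simp [sRefl, hc, hv c hc' hc]) (by rw [e]; omega)
      (by
        rw [ea, e]
        have := mul_lt_mul_of_pos_left hlt hm
        have := mul_le_mul_of_nonneg_right hmk' hpos.le
        nlinarith)
    refine ⟨b :: w, ?_⟩
    rw [ea, e] at hw
    simp only [sPath]
    push_cast
    omega

/-- A Cartan pair of vertices of affine or indefinite type does not occur. -/
lemma GoodMat.false_of_affine (hq : GoodMat q) {a b : Fin n} (hab : a ≠ b) {m k : ℕ}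
    (h : MinExp (q a a) (qtil q a b) m) (h' : MinExp (q b b) (qtil q a b) k)
    (hmk : 4 ≤ m * k) : False := by
  rw [qtil_comm a b] at h'
  set v : Fin n → ℤ := Pi.single a 1
  obtain ⟨B, hB⟩ := ((hq.2 v).image fun β => β a + β b).bddAbove
  have hk : 0 < k := Nat.pos_of_ne_zero (by rintro rfl; simp at hmk)
  obtain ⟨w, hw⟩ := exists_sPath_large (B.toNat + 1) hab h h' hmk (v := v)
    (fun c hc _ => by simp [v, hc]) (by simp [v]) (by simp [v, hab.symm, hk])
  have h1 : sPath w q v a + sPath w q v b ≤ B := hB ⟨_, ⟨w, rfl⟩, rfl⟩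
  have h2 : v a + v b = 1 := by simp [v, hab.symm]
  omega

/-- A path along which a class of braiding matrices returns to itself cannot act as a
nontrivial unipotent map. -/
lemma GoodMat.false_of_loop {P : (Fin n → Fin n → ℂˣ) → Prop} (hq : GoodMat q) (hP : P q)
    (w : List (Fin n)) {v η : Fin n → ℤ} (hη : η ≠ 0)
    (h : ∀ q, P q → P (reflPath w q) ∧ sPath w q v = v + η ∧ sPath w q η = η) : False := by
  have key : ∀ N : ℕ, ∀ q, P q → ∀ k : ℤ, ∃ w', sPath w' q (v + k • η) = v + (k + N) • η := by
    intro N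
    induction N with
    | zero => intro q _ k; exact ⟨[], by simp [sPath]⟩
    | succ N ih =>
      intro q hP k
      obtain ⟨h1, h2, h3⟩ := h q hP
      obtain ⟨w', hw'⟩ := ih _ h1 (k + 1)
      refine ⟨w ++ w', ?_⟩
      have : v + η + k • η = v + (k + 1) • η := by rw [add_smul, one_smul]; abel
      rw [sPath_append, sPath_add, sPath_smul, h2, h3, this, hw']
      congr 2
      push_cast
      ring
  have hinf : (Set.range fun N : ℕ => v + (N : ℤ) • η).Infinite := by
    refine Set.infinite_range_of_injective fun M N hMN => ?_
    have : ((M : ℤ) - N) • η = 0 := by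
      rw [sub_smul, sub_eq_zero]; exact add_left_cancel hMN
    rcases smul_eq_zero.1 this with h0 | h0
    · omega
    · exact absurd h0 hη
  refine hinf ((hq.2 v).subset ?_)
  rintro _ ⟨N, rfl⟩
  obtain ⟨w', hw'⟩ := key N q hP 0
  exact ⟨w', by simpa using hw'⟩

end RootSystem

section Exponents

variable {n : ℕ} {q : Fin n → Fin n → ℂˣ} {N : ℕ} {ζ : ℂ} {τ : Fin n → ℂ}
  {d d' : Fin n → ℤ} {e e' : Fin n → Fin n → ℤ} {m : Fin n → ℕ}

/-- The diagram of `q` is given by exponents of `ζ`, up to the factors `τ` at the vertices. -/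
structure ExpDiagram (ζ : ℂ) (τ : Fin n → ℂ) (d : Fin n → ℤ) (e : Fin n → Fin n → ℤ)
    (q : Fin n → Fin n → ℂˣ) : Prop where
  diag : ∀ a, (q a a : ℂ) = ζ ^ d a * τ a
  edge : ∀ a b, a ≠ b → qtil q a b = ζ ^ e a b

/-- The exponents with `s_i α_a = α_a + reflExp i m a • α_i`. -/
def reflExp (i : Fin n) (m : Fin n → ℕ) (a : Fin n) : ℤ := if a = i then -2 else m a

/-- The exponents of the symmetrized form paired with `α_i`. -/
def pairExp (d : Fin n → ℤ) (e : Fin n → Fin n → ℤ) (i a : Fin n) : ℤ :=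
  if a = i then 2 * d i else e i a

/-- Arithmetic description of a reflection in terms of exponents modulo `N`. -/
def ReflStep (N : ℕ) (d : Fin n → ℤ) (e : Fin n → Fin n → ℤ) (i : Fin n) (m : Fin n → ℕ)
    (d' : Fin n → ℤ) (e' : Fin n → Fin n → ℤ) : Prop :=
  (∀ a, a ≠ i →
    (((N : ℤ) ∣ m a * d i + e i a ∨ ¬ (N : ℤ) ∣ d i ∧ (N : ℤ) ∣ (m a + 1) * d i) ∧
      ∀ k < m a, ¬ (N : ℤ) ∣ k * d i + e i a ∧ ((N : ℤ) ∣ d i ∨ ¬ (N : ℤ) ∣ (k + 1) * d i))) ∧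
  (∀ a, (N : ℤ) ∣ d' a -
    (d a + reflExp i m a * pairExp d e i a + reflExp i m a ^ 2 * d i)) ∧
  ∀ a b, a ≠ b → (N : ℤ) ∣ e' a b - (e a b + reflExp i m b * pairExp d e i a +
    reflExp i m a * pairExp d e i b + 2 * reflExp i m a * reflExp i m b * d i)

instance (i : Fin n) : Decidable (ReflStep N d e i m d' e') :=
  inferInstanceAs (Decidable (_ ∧ _ ∧ _))

lemma zpow_eq_of_dvd (hζ : IsPrimitiveRoot ζ N) (hN : N ≠ 0) {x y : ℤ} (h : (N : ℤ) ∣ x - y) :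
    ζ ^ x = ζ ^ y := by
  have h1 := (hζ.zpow_eq_one_iff_dvd _).2 h
  rwa [zpow_sub₀ (hζ.ne_zero hN), div_eq_one_iff_eq (zpow_ne_zero _ (hζ.ne_zero hN))] at h1

lemma mem_cSet_iff (hζ : IsPrimitiveRoot ζ N) (hN : N ≠ 0) {i a : Fin n} {x y : ℤ}
    (hx : (q i i : ℂ) = ζ ^ x) (hy : qtil q i a = ζ ^ y) (k : ℕ) :
    k ∈ cSet q i a ↔ (N : ℤ) ∣ k * x + y ∨ ¬ (N : ℤ) ∣ x ∧ (N : ℤ) ∣ (k + 1) * x := by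
  have hz := hζ.ne_zero hN
  have h1 : (ζ ^ x) ^ k * ζ ^ y = ζ ^ ((k : ℤ) * x + y) := by
    rw [zpow_add₀ hz, mul_comm (k : ℤ), zpow_mul, zpow_natCast]
  have h2 : (ζ ^ x) ^ (k + 1) = ζ ^ (((k : ℤ) + 1) * x) := by
    rw [mul_comm, zpow_mul]; norm_cast
  rw [cSet, Set.mem_ofPred_eq, hx, hy, mul_eq_zero, or_comm, sub_eq_zero, eq_comm (a := (1 : ℂ)),
    h1, hζ.zpow_eq_one_iff_dvd]
  refine or_congr_right ?_
  rw [← hζ.zpow_eq_one_iff_dvd x, ← hζ.zpow_eq_one_iff_dvd (((k : ℤ) + 1) * x), ← h2]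
  have h3 := qnum_mul_sub_one (ζ ^ x) (k + 1)
  by_cases h : ζ ^ x = 1
  · simp only [h, not_true_eq_false, false_and, iff_false, qnum, one_pow]
    simp only [Finset.sum_const, Finset.card_range, nsmul_eq_mul, mul_one]
    exact_mod_cast Nat.succ_ne_zero k
  · simp only [h, not_false_eq_true, true_and]
    constructor
    · intro h0
      rw [h0, zero_mul] at h3
      exact sub_eq_zero.1 h3.symm
    · intro h0
      rw [h0, sub_self] at h3
      exact (mul_eq_zero.1 h3).resolve_right (sub_ne_zero.2 h)

lemma ExpDiagram.cij_eq (h : ExpDiagram ζ τ d e q) (hζ : IsPrimitiveRoot ζ N) (hN : N ≠ 0)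
    {i : Fin n} (hτ : τ i = 1) (ok : ReflStep N d e i m d' e') (a : Fin n) :
    cij q i a = -reflExp i m a := by
  by_cases ha : a = i
  · simp [cij, reflExp, ha]
  obtain ⟨h1, h2⟩ := ok.1 a ha
  have hi : (q i i : ℂ) = ζ ^ d i := by rw [h.diag, hτ, mul_one]
  have hc := mem_cSet_iff hζ hN hi (h.edge i a (Ne.symm ha))
  have : sInf (cSet q i a) = m a := by
    refine le_antisymm (Nat.sInf_le ((hc _).2 h1)) (le_csInf ⟨_, (hc _).2 h1⟩ fun k hk => ?_)
    by_contra! hlt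
    have := h2 k hlt
    have := (hc k).1 hk
    tauto
  simp [cij, reflExp, ha, Ne.symm ha, this]

lemma ExpDiagram.qtil_self (h : ExpDiagram ζ τ d e q) (hz : ζ ≠ 0) {i : Fin n} (hτ : τ i = 1)
    (a : Fin n) : qtil q i a = ζ ^ pairExp d e i a := by
  by_cases ha : a = i
  · rw [ha, qtil, h.diag, hτ, mul_one, pairExp, if_pos rfl, two_mul, zpow_add₀ hz]
  · rw [h.edge i a (Ne.symm ha), pairExp, if_neg ha]

lemma ExpDiagram.reflect (h : ExpDiagram ζ τ d e q) (hζ : IsPrimitiveRoot ζ N) (hN : N ≠ 0)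
    (i : Fin n) (hτ : τ i = 1) (m : Fin n → ℕ) (ok : ReflStep N d e i m d' e') :
    ExpDiagram ζ τ d' e' (reflectMat q i) := by
  have hz := hζ.ne_zero hN
  have hi : (q i i : ℂ) = ζ ^ d i := by rw [h.diag, hτ, mul_one]
  constructor
  · intro a
    rw [reflectMat_diag, h.cij_eq hζ hN hτ ok, h.diag, h.qtil_self hz hτ, hi,
      zpow_eq_of_dvd hζ hN (ok.2.1 a), zpow_add₀ hz, zpow_add₀ hz, ← zpow_mul, ← zpow_mul]
    have e1 : pairExp d e i a * - -reflExp i m a = reflExp i m a * pairExp d e i a := by ring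
    have e2 : d i * (-reflExp i m a * -reflExp i m a) = reflExp i m a ^ 2 * d i := by ring
    rw [e1, e2]
    ring
  · intro a b hab
    rw [qtil_reflectMat, h.cij_eq hζ hN hτ ok, h.cij_eq hζ hN hτ ok, h.edge a b hab,
      h.qtil_self hz hτ, h.qtil_self hz hτ, hi, zpow_eq_of_dvd hζ hN (ok.2.2 a b hab),
      zpow_add₀ hz, zpow_add₀ hz, zpow_add₀ hz, ← zpow_mul, ← zpow_mul, ← zpow_mul]
    have e1 : ∀ x y : ℤ, x * - -y = y * x := fun x y => by ring
    have e2 : d i * (2 * (-reflExp i m a * -reflExp i m b)) =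
      2 * reflExp i m a * reflExp i m b * d i := by ring
    rw [e1, e1, e2]

lemma ExpDiagram.sRefl_eq (h : ExpDiagram ζ τ d e q) (hζ : IsPrimitiveRoot ζ N) (hN : N ≠ 0)
    {i : Fin n} (hτ : τ i = 1) (ok : ReflStep N d e i m d' e') (v : Fin n → ℤ) :
    sRefl q i v = fun k => v k + if k = i then ∑ j, reflExp i m j * v j else 0 := by
  funext k
  simp only [sRefl, h.cij_eq hζ hN hτ ok, neg_mul, Finset.sum_neg_distrib]
  split_ifs <;> ring

lemma ExpDiagram.minExp (h : ExpDiagram ζ τ d e q) (hζ : IsPrimitiveRoot ζ N) (hN : N ≠ 0)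
    {a b : Fin n} (hab : a ≠ b) (hτ : τ a = 1) (k : ℕ)
    (ok : (N : ℤ) ∣ k * d a + e a b ∧ ∀ r < k, ¬ (N : ℤ) ∣ r * d a + e a b) :
    MinExp (q a a) (qtil q a b) k := by
  have hz := hζ.ne_zero hN
  have key : ∀ r : ℕ, (q a a : ℂ) ^ r * qtil q a b = 1 ↔ (N : ℤ) ∣ r * d a + e a b := by
    intro r
    rw [h.diag, hτ, mul_one, h.edge a b hab, ← hζ.zpow_eq_one_iff_dvd, zpow_add₀ hz,
      mul_comm (r : ℤ), zpow_mul, zpow_natCast]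
  exact ⟨(key k).2 ok.1, fun r hr => mt (key r).1 (ok.2 r hr)⟩

/-- A Cartan pair of affine or indefinite type, in terms of exponents. -/
lemma ExpDiagram.false_of_affine (h : ExpDiagram ζ τ d e q) (hζ : IsPrimitiveRoot ζ N)
    (hN : N ≠ 0) (hq : GoodMat q) {a b : Fin n} (hab : a ≠ b) (ha : τ a = 1) (hb : τ b = 1)
    (r s : ℕ) (ok : ((N : ℤ) ∣ r * d a + e a b ∧ ∀ k < r, ¬ (N : ℤ) ∣ k * d a + e a b) ∧
      ((N : ℤ) ∣ s * d b + e b a ∧ ∀ k < s, ¬ (N : ℤ) ∣ k * d b + e b a) ∧ 4 ≤ r * s) :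
    False :=
  hq.false_of_affine hab (h.minExp hζ hN hab ha r ok.1)
    (qtil_comm a b ▸ h.minExp hζ hN hab.symm hb s ok.2.1) ok.2.2

/-- A vertex labelled `1` with a neighbour, in terms of exponents. -/
lemma ExpDiagram.false_of_one (h : ExpDiagram ζ τ d e q) (hζ : IsPrimitiveRoot ζ N)
    (hq : GoodMat q) {a b : Fin n} (hab : a ≠ b) (ha : τ a = 1)
    (ok : (N : ℤ) ∣ d a ∧ ¬ (N : ℤ) ∣ e a b) : False := by
  refine hq.false_of_one hab ?_ ?_
  · rw [h.diag, ha, mul_one, hζ.zpow_eq_one_iff_dvd]; exact ok.1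
  · rw [h.edge a b hab, Ne, hζ.zpow_eq_one_iff_dvd]; exact ok.2

end Exponents

section RankFour

variable {q : Fin 4 → Fin 4 → ℂˣ} {p t : ℂ}

lemma ExpDiagram.absorb {n : ℕ} {q : Fin n → Fin n → ℂˣ} {ζ : ℂ} {τ : Fin n → ℂ}
    {d : Fin n → ℤ} {e : Fin n → Fin n → ℤ} (h : ExpDiagram ζ τ d e q) (hz : ζ ≠ 0)
    (x : Fin n → ℤ) (hx : ∀ a, τ a = ζ ^ x a) : ExpDiagram ζ (fun _ => 1) (d + x) e q :=
  ⟨fun a => by rw [h.diag, hx, Pi.add_apply, zpow_add₀ hz, mul_one], h.edge⟩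

lemma exists_pow_eq_one_of_reflectable {n : ℕ} {q : Fin n → Fin n → ℂˣ} {a b : Fin n}
    (h : reflectable q a) (hab : b ≠ a) :
    (∃ m, (q a a : ℂ) ^ (m + 1) = 1) ∨ ∃ m, (q a a : ℂ) ^ m * qtil q a b = 1 := by
  obtain ⟨m, hm⟩ := h b hab
  rw [cSet, Set.mem_ofPred_eq, mul_eq_zero] at hm
  rcases hm with hm | hm
  · have h1 := qnum_mul_sub_one (q a a : ℂ) (m + 1)
    rw [hm, zero_mul] at h1
    exact .inl ⟨m, sub_eq_zero.1 h1.symm⟩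
  · exact .inr ⟨m, (sub_eq_zero.1 hm).symm⟩

/-- The edges of the diagram `i — j — k — ℓ` as exponents of `q̃_{jk}`. -/
abbrev chainEdges : Fin 4 → Fin 4 → ℤ :=
  ![![0, 1, 0, 0], ![1, 0, 1, 0], ![0, 1, 0, 3], ![0, 0, 3, 0]]

lemma false_of_chain_six_neg_one (hp : IsPrimitiveRoot p 6) (hq : GoodMat q)
    (h : ExpDiagram p (fun _ => 1) ![3, -1, 3, 3] chainEdges q) : False := by
  refine hq.false_of_loop h [0, 2, 3, 1, 0, 3, 2, 1] (v := ![1, 0, 0, 0])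
    (η := ![-2, -3, -4, -2]) (by decide) fun q h => ?_
  have ok1 : ReflStep 6 ![3, -1, 3, 3] chainEdges 0 ![0, 1, 0, 0] ![3, 3, 3, 3]
    ![![0, -1, 0, 0], ![-1, 0, 1, 0], ![0, 1, 0, 3], ![0, 0, 3, 0]] := by decide
  have h1 := h.reflect hp (by norm_num) 0 rfl _ ok1
  have ok2 : ReflStep 6 ![3, 3, 3, 3]
    ![![0, -1, 0, 0], ![-1, 0, 1, 0], ![0, 1, 0, 3], ![0, 0, 3, 0]] 2 ![0, 1, 0, 1] ![3, 1, 3, 3]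
    ![![0, -1, 0, 0], ![-1, 0, -1, -2], ![0, -1, 0, 3], ![0, -2, 3, 0]] := by decide
  have h2 := h1.reflect hp (by norm_num) 2 rfl _ ok2
  have ok3 : ReflStep 6 ![3, 1, 3, 3]
    ![![0, -1, 0, 0], ![-1, 0, -1, -2], ![0, -1, 0, 3], ![0, -2, 3, 0]] 3 ![0, 1, 1, 0]
    ![3, 2, 3, 3] ![![0, -1, 0, 0], ![-1, 0, 0, 2], ![0, 0, 0, 3], ![0, 2, 3, 0]] := by decide
  have h3 := h2.reflect hp (by norm_num) 3 rfl _ ok3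
  have ok4 : ReflStep 6 ![3, 2, 3, 3]
    ![![0, -1, 0, 0], ![-1, 0, 0, 2], ![0, 0, 0, 3], ![0, 2, 3, 0]] 1 ![2, 0, 0, 2]
    ![3, 2, 3, 3] ![![0, -1, 0, 0], ![-1, 0, 0, 2], ![0, 0, 0, 3], ![0, 2, 3, 0]] := by decide
  have h4 := h3.reflect hp (by norm_num) 1 rfl _ ok4
  have ok5 : ReflStep 6 ![3, 2, 3, 3]
    ![![0, -1, 0, 0], ![-1, 0, 0, 2], ![0, 0, 0, 3], ![0, 2, 3, 0]] 0 ![0, 1, 0, 0]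
    ![3, -2, 3, 3] ![![0, 1, 0, 0], ![1, 0, 0, 2], ![0, 0, 0, 3], ![0, 2, 3, 0]] := by decide
  have h5 := h4.reflect hp (by norm_num) 0 rfl _ ok5
  have ok6 : ReflStep 6 ![3, -2, 3, 3]
    ![![0, 1, 0, 0], ![1, 0, 0, 2], ![0, 0, 0, 3], ![0, 2, 3, 0]] 3 ![0, 1, 1, 0]
    ![3, 3, 3, 3] ![![0, 1, 0, 0], ![1, 0, -1, -2], ![0, -1, 0, 3], ![0, -2, 3, 0]] := by decide
  have h6 := h5.reflect hp (by norm_num) 3 rfl _ ok6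
  have ok7 : ReflStep 6 ![3, 3, 3, 3]
    ![![0, 1, 0, 0], ![1, 0, -1, -2], ![0, -1, 0, 3], ![0, -2, 3, 0]] 2 ![0, 1, 0, 1]
    ![3, -1, 3, 3] chainEdges := by decide
  have h7 := h6.reflect hp (by norm_num) 2 rfl _ ok7
  have ok8 : ReflStep 6 ![3, -1, 3, 3] chainEdges 1 ![1, 0, 1, 0] ![3, -1, 3, 3] chainEdges := by
    decide
  refine ⟨h7.reflect hp (by norm_num) 1 rfl _ ok8, ?_⟩
  simp only [sPath, h.sRefl_eq hp (by norm_num) rfl ok1, h1.sRefl_eq hp (by norm_num) rfl ok2,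
    h2.sRefl_eq hp (by norm_num) rfl ok3, h3.sRefl_eq hp (by norm_num) rfl ok4,
    h4.sRefl_eq hp (by norm_num) rfl ok5, h5.sRefl_eq hp (by norm_num) rfl ok6,
    h6.sRefl_eq hp (by norm_num) rfl ok7, h7.sRefl_eq hp (by norm_num) rfl ok8]
  decide +kernel

lemma pow_three_of_six (hp : IsPrimitiveRoot p 6) : p ^ 3 = -1 := by
  have h6 : (p ^ 3 - 1) * (p ^ 3 + 1) = 0 := by linear_combination hp.pow_eq_one
  rcases mul_eq_zero.1 h6 with h | h
  · exact absurd (sub_eq_zero.1 h) (hp.pow_ne_one_of_pos_of_lt (by norm_num) (by norm_num))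
  · linear_combination h

lemma sq_of_four (hp : IsPrimitiveRoot p 4) : p ^ 2 = -1 := by
  have h6 : (p ^ 2 - 1) * (p ^ 2 + 1) = 0 := by linear_combination hp.pow_eq_one
  rcases mul_eq_zero.1 h6 with h | h
  · exact absurd (sub_eq_zero.1 h) (hp.pow_ne_one_of_pos_of_lt (by norm_num) (by norm_num))
  · linear_combination h

/-- The diagram of the statement does not occur if `q̃_{jk}` has order `6`. -/
lemma false_of_chain_six (hp : IsPrimitiveRoot p 6) (hq : GoodMat q)
    (h : ExpDiagram p ![1, 1, 1, t] ![3, -1, 3, 0] chainEdges q) : False := by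
  have hz : p ≠ 0 := hp.ne_zero (by norm_num)
  have hp3 := pow_three_of_six hp
  have h33 : (q 3 3 : ℂ) = t := by simpa using h.diag 3
  have h32 : qtil q 3 2 = -1 := by
    rw [h.edge 3 2 (by decide)]; simp [hp3]
  by_cases ht1 : t = 1
  · exact hq.false_of_one (a := 3) (b := 2) (by decide) (h33.trans ht1) (by rw [h32]; norm_num)
  by_cases ha : ∃ m, t ^ m * -1 = 1
  · obtain ⟨m₀, hm₀⟩ := ha
    obtain ⟨m, -, hm⟩ := exists_minExp hm₀
    match m, hm with
    | 0, hm => exact absurd hm.1 (by norm_num)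
    | 1, hm =>
      have ht : t = -1 := by linear_combination -hm.1
      refine false_of_chain_six_neg_one hp hq ?_
      have := h.absorb hz ![0, 0, 0, 3] (by
        intro a
        fin_cases a <;> simp [ht]
        rw [← hp3])
      convert this using 1
      decide
    | m + 2, hm =>
      have h1 := h.reflect hp (by norm_num) 0 rfl ![0, 1, 0, 0] (d' := ![3, 3, 3, 0])
        (e' := ![![0, -1, 0, 0], ![-1, 0, 1, 0], ![0, 1, 0, 3], ![0, 0, 3, 0]]) (by decide)
      have h2 := h1.reflect hp (by norm_num) 1 rfl ![1, 0, 1, 0] (d' := ![-1, 3, 1, 0])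
        (e' := ![![0, 1, 0, 0], ![1, 0, -1, 0], ![0, -1, 0, 3], ![0, 0, 3, 0]]) (by decide)
      refine ((hq.reflect 0).reflect 1).false_of_affine (a := 2) (b := 3) (by decide)
        (h2.minExp hp (by norm_num) (by decide) rfl 3 (by decide)) (k := m + 2) ?_ (by omega)
      have e1 : (reflectMat (reflectMat q 0) 1 3 3 : ℂ) = t := by simpa using h2.diag 3
      have e2 : qtil (reflectMat (reflectMat q 0) 1) 2 3 = -1 := by
        rw [h2.edge 2 3 (by decide)]; simp [hp3]
      rwa [e1, e2]
  by_cases hb : ∃ m, t ^ m * p ^ 4 = 1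
  · obtain ⟨m₀, hm₀⟩ := hb
    obtain ⟨m, -, hm⟩ := exists_minExp hm₀
    match m, hm with
    | 0, hm => exact absurd hm.1 (by
        simpa using hp.pow_ne_one_of_pos_of_lt (l := 4) (by norm_num) (by norm_num))
    | 1, hm =>
      have ht : t = p ^ 2 := by
        have := hm.1
        linear_combination p ^ 2 * this - t * hp.pow_eq_one
      have h0 := h.absorb hz ![0, 0, 0, 2] (by
        intro a
        fin_cases a <;> simp [ht])
      have h1 := h0.reflect hp (by norm_num) 0 rfl ![0, 1, 0, 0] (d' := ![3, 3, 3, 2])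
        (e' := ![![0, -1, 0, 0], ![-1, 0, 1, 0], ![0, 1, 0, 3], ![0, 0, 3, 0]]) (by decide)
      have h2 := h1.reflect hp (by norm_num) 1 rfl ![1, 0, 1, 0] (d' := ![-1, 3, 1, 2])
        (e' := ![![0, 1, 0, 0], ![1, 0, -1, 0], ![0, -1, 0, 3], ![0, 0, 3, 0]]) (by decide)
      have h3 := h2.reflect hp (by norm_num) 3 rfl ![0, 0, 2, 0] (d' := ![-1, 3, 3, 2])
        (e' := ![![0, 1, 0, 0], ![1, 0, -1, 0], ![0, -1, 0, 1], ![0, 0, 1, 0]]) (by decide)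
      have h4 := h3.reflect hp (by norm_num) 2 rfl ![0, 1, 0, 1] (d' := ![-1, -1, 3, 0])
        (e' := ![![0, 1, 0, 0], ![1, 0, 1, 0], ![0, 1, 0, -1], ![0, 0, -1, 0]]) (by decide)
      exact h4.false_of_one hp ((((hq.reflect 0).reflect 1).reflect 3).reflect 2) (a := 3) (b := 2)
        (by decide) rfl (by decide)
    | m + 2, hm =>
      have h1 := h.reflect hp (by norm_num) 0 rfl ![0, 1, 0, 0] (d' := ![3, 3, 3, 0])
        (e' := ![![0, -1, 0, 0], ![-1, 0, 1, 0], ![0, 1, 0, 3], ![0, 0, 3, 0]]) (by decide)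
      have h2 := h1.reflect hp (by norm_num) 2 rfl ![0, 1, 0, 1] (d' := ![3, 1, 3, 0])
        (e' := ![![0, -1, 0, 0], ![-1, 0, -1, 4], ![0, -1, 0, 3], ![0, 4, 3, 0]]) (by decide)
      refine ((hq.reflect 0).reflect 2).false_of_affine (a := 1) (b := 3) (by decide)
        (h2.minExp hp (by norm_num) (by decide) rfl 2 (by decide)) (k := m + 2) ?_ (by omega)
      have e1 : (reflectMat (reflectMat q 0) 2 3 3 : ℂ) = t := by simpa using h2.diag 3
      have e2 : qtil (reflectMat (reflectMat q 0) 2) 1 3 = p ^ 4 := by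
        rw [h2.edge 1 3 (by decide)]; simp
      rwa [e1, e2]
  have hM : ∃ M, 0 < M ∧ t ^ M = 1 := by
    rcases exists_pow_eq_one_of_reflectable (hq.1 [] 3) (b := 2) (by decide) with ⟨m, hm⟩ | ⟨m, hm⟩
    · exact ⟨m + 1, by omega, by simpa [reflPath, h33] using hm⟩
    · exact absurd ⟨m, by simpa [reflPath, h33, h32] using hm⟩ ha
  have hpos : 0 < orderOf t := by
    obtain ⟨M, hM, hM'⟩ := hM
    exact orderOf_pos_iff.2 (isOfFinOrder_iff_pow_eq_one.2 ⟨M, hM, hM'⟩)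
  have h2 : ¬ 2 ∣ orderOf t := by
    rintro ⟨r, hr⟩
    have h0 : (t ^ r - 1) * (t ^ r + 1) = 0 := by
      have := pow_orderOf_eq_one t
      rw [hr, mul_comm, pow_mul] at this
      linear_combination this
    rcases mul_eq_zero.1 h0 with h0 | h0
    · exact pow_ne_one_of_lt_orderOf (by omega) (by omega) (sub_eq_zero.1 h0)
    · exact ha ⟨r, by linear_combination -h0⟩
  have h3 : ¬ 3 ∣ orderOf t := by
    rintro ⟨r, hr⟩
    have hp6 := hp.pow_eq_one
    have h0 : (t ^ r - 1) * ((t ^ r - p ^ 2) * (t ^ r - p ^ 4)) = 0 := by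
      have h1 := pow_orderOf_eq_one t
      rw [hr, mul_comm, pow_mul] at h1
      have h5 : p ^ 2 - p + 1 = 0 := by
        have : (p + 1) * (p ^ 2 - p + 1) = 0 := by linear_combination hp3
        refine (mul_eq_zero.1 this).resolve_left fun h0 => ?_
        refine hp.pow_ne_one_of_pos_of_lt (l := 2) (by norm_num) (by norm_num) ?_
        linear_combination (p - 1) * h0
      linear_combination h1 - hp6 +
        (p ^ 2 * t ^ r - (t ^ r) ^ 2) * (p ^ 2 + p + 1) * h5
    rcases mul_eq_zero.1 h0 with h0 | h0
    · exact pow_ne_one_of_lt_orderOf (by omega) (by omega) (sub_eq_zero.1 h0)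
    rcases mul_eq_zero.1 h0 with h0 | h0
    · exact hb ⟨r, by linear_combination p ^ 4 * h0 + hp6⟩
    · exact hb ⟨r * 2, by
        rw [pow_mul]
        linear_combination (t ^ r + p ^ 4) * p ^ 4 * h0 + (p ^ 6 + 1) * hp6⟩
  have hexp : ∃ m, (p * t) ^ m * p⁻¹ = 1 := by
    have key : ∀ m, (p * t) ^ (orderOf t * m) = p ^ (orderOf t * m) := by
      intro m
      rw [mul_pow, pow_mul t, pow_orderOf_eq_one, one_pow, mul_one]
    have h5 : orderOf t % 6 = 1 ∨ orderOf t % 6 = 5 := by omega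
    have hone : ∀ m, m % 6 = 1 → p ^ m = p := by
      intro m hm
      rw [← Nat.div_add_mod m 6, hm, pow_add, pow_mul, hp.pow_eq_one, one_pow, one_mul, pow_one]
    rcases h5 with h5 | h5
    · exact ⟨orderOf t * 1, by rw [key, hone _ (by omega), mul_inv_cancel₀ hz]⟩
    · exact ⟨orderOf t * 5, by rw [key, hone _ (by omega), mul_inv_cancel₀ hz]⟩
  obtain ⟨m₀, hm₀⟩ := hexp
  obtain ⟨m, -, hm⟩ := exists_minExp hm₀
  match m, hm with
  | 0, hm =>
    have := hm.1
    rw [pow_zero, one_mul, inv_eq_one] at this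
    exact hp.ne_one (by norm_num) this
  | 1, hm =>
    have := hm.1
    field_simp at this
    exact ht1 (by simpa using this)
  | 2, hm =>
    have := hm.1
    field_simp at this
    refine ha ⟨6, ?_⟩
    linear_combination (p ^ 2 * t ^ 4 + p * t ^ 2 + 1) * this - t ^ 6 * hp3
  | 3, hm =>
    have := hm.1
    field_simp at this
    exact hb ⟨6, by linear_combination (p ^ 2 * t ^ 3 + 1) * this⟩
  | m + 4, hm =>
    have h1 := h.reflect hp (by norm_num) 2 rfl ![0, 1, 0, 1] (d' := ![3, 3, 3, 0])
      (e' := ![![0, 1, 0, 0], ![1, 0, -1, -2], ![0, -1, 0, 3], ![0, -2, 3, 0]]) (by decide)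
    have h2 := h1.reflect hp (by norm_num) 1 rfl ![1, 0, 1, 1] (d' := ![1, 3, -1, 1])
      (e' := ![![0, -1, 0, -1], ![-1, 0, 1, 2], ![0, 1, 0, 0], ![-1, 2, 0, 0]]) (by decide)
    refine ((hq.reflect 2).reflect 1).false_of_affine (a := 0) (b := 3) (by decide)
      (h2.minExp hp (by norm_num) (by decide) rfl 1 (by decide)) (k := m + 4) ?_ (by omega)
    have e1 : (reflectMat (reflectMat q 2) 1 3 3 : ℂ) = p * t := by simpa using h2.diag 3
    have e2 : qtil (reflectMat (reflectMat q 2) 1) 0 3 = p⁻¹ := by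
      rw [h2.edge 0 3 (by decide)]; simp
    rwa [e1, e2]

end RankFour

section OrderFour

variable {p t ζ : ℂ}

lemma exists_pow_of_order_four {M : ℕ} (hp : p ^ 2 = -1) (hM : 0 < M) (ht : t ^ M = 1) :
    (∃ m, t ^ m * p⁻¹ = 1) ∨ ∃ m, (p * t) ^ m * p = 1 := by
  have hz : p ≠ 0 := by rintro rfl; norm_num at hp
  have hpos : 0 < orderOf t :=
    orderOf_pos_iff.2 (isOfFinOrder_iff_pow_eq_one.2 ⟨M, hM, ht⟩)
  have hsq : ∀ u : ℂ, u ^ 2 = -1 → u = p ∨ u = -p := by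
    intro u hu
    exact sq_eq_sq_iff_eq_or_eq_neg.1 (hu.trans hp.symm)
  have hhalf : ∀ r, orderOf t = 2 * r → t ^ r = -1 := by
    intro r hr
    have h1 := pow_orderOf_eq_one t
    rw [hr, mul_comm, pow_mul] at h1
    refine (sq_eq_one_iff.1 h1).resolve_left ?_
    exact pow_ne_one_of_lt_orderOf (by omega) (by omega)
  by_cases h4 : 4 ∣ orderOf t
  · left
    obtain ⟨r, hr⟩ := h4
    have h2 : (t ^ r) ^ 2 = -1 := by
      rw [← pow_mul]; exact hhalf _ (by omega)
    rcases hsq _ h2 with h | h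
    · exact ⟨r, by rw [h, mul_inv_cancel₀ hz]⟩
    · exact ⟨r * 3, by rw [pow_mul, h]; field_simp; linear_combination -hp⟩
  · right
    obtain ⟨r, hr, h2⟩ : ∃ r, r % 2 = 1 ∧ (t ^ r) ^ 2 = 1 := by
      rcases Nat.even_or_odd' (orderOf t) with ⟨r, hr | hr⟩
      · exact ⟨r, by omega, by rw [hhalf r hr]; norm_num⟩
      · exact ⟨orderOf t, by omega, by rw [pow_orderOf_eq_one]; norm_num⟩
    have h3 : ((p * t) ^ r) ^ 2 = -1 := by
      rw [mul_pow, mul_pow, h2, mul_one, ← pow_mul, mul_comm, pow_mul, hp]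
      exact (Nat.odd_iff.2 hr).neg_one_pow
    rcases hsq _ h3 with h | h
    · exact ⟨r * 3, by rw [pow_mul, h]; linear_combination (p ^ 2 - 1) * hp⟩
    · exact ⟨r, by rw [h]; linear_combination -hp⟩

/-- Constraints on `q_{ℓℓ}` if `q̃_{jk}` has order `4`. -/
lemma chain_four_constraint {q : Fin 4 → Fin 4 → ℂˣ} (hp : IsPrimitiveRoot p 4) (hq : GoodMat q)
    (h : ExpDiagram p ![1, 1, 1, t] ![2, -1, 2, 0] chainEdges q) :
    t ≠ 1 ∧ p * t ≠ 1 ∧ ((∃ m ≤ 3, t ^ m * p⁻¹ = 1) ∨ ∃ m ≤ 3, (p * t) ^ m * p = 1) := by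
  have hz : p ≠ 0 := hp.ne_zero (by norm_num)
  have hp2 := sq_of_four hp
  have hp3 : p ^ 3 = p⁻¹ := by field_simp; exact hp.pow_eq_one
  have hp1 : p⁻¹ ≠ 1 := by
    rw [Ne, inv_eq_one]; exact hp.ne_one (by norm_num)
  have h33 : (q 3 3 : ℂ) = t := by simpa using h.diag 3
  have h32 : qtil q 3 2 = p⁻¹ := by
    rw [h.edge 3 2 (by decide)]; simp [hp3]
  have ht1 : t ≠ 1 := fun ht1 =>
    hq.false_of_one (a := 3) (b := 2) (by decide) (h33.trans ht1) (by rwa [h32])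
  have h1 := h.reflect hp (by norm_num) 2 rfl ![0, 1, 0, 1] (d' := ![2, 2, 2, 1])
      (e' := ![![0, 1, 0, 0], ![1, 0, -1, 0], ![0, -1, 0, 1], ![0, 0, 1, 0]]) (by decide)
  refine ⟨ht1, fun hpt => ?_, ?_⟩
  · refine (hq.reflect 2).false_of_one (a := 3) (b := 2) (by decide) ?_ ?_
    · rw [h1.diag]; simpa using hpt
    · rw [h1.edge 3 2 (by decide)]; simpa using hp.ne_one (by norm_num)
  have key : (∃ m, t ^ m * p⁻¹ = 1) ∨ ∃ m, (p * t) ^ m * p = 1 := by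
    rcases exists_pow_eq_one_of_reflectable (hq.1 [] 3) (b := 2) (by decide) with ⟨m, hm⟩ | ⟨m, hm⟩
    · exact exists_pow_of_order_four hp2 m.succ_pos (by simpa [reflPath, h33] using hm)
    · exact .inl ⟨m, by simpa [reflPath, h33, h32] using hm⟩
  rcases key with ⟨m₀, hm₀⟩ | ⟨m₀, hm₀⟩
  · left
    obtain ⟨m, -, hm⟩ := exists_minExp hm₀
    refine ⟨m, ?_, hm.1⟩
    by_contra! hlt
    have h1 := h.reflect hp (by norm_num) 0 rfl ![0, 1, 0, 0] (d' := ![2, 2, 2, 0])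
      (e' := ![![0, -1, 0, 0], ![-1, 0, 1, 0], ![0, 1, 0, -1], ![0, 0, -1, 0]]) (by decide)
    have h2 := h1.reflect hp (by norm_num) 1 rfl ![1, 0, 1, 0] (d' := ![-1, 2, 1, 0])
      (e' := ![![0, 1, 0, 0], ![1, 0, -1, 0], ![0, -1, 0, -1], ![0, 0, -1, 0]]) (by decide)
    refine ((hq.reflect 0).reflect 1).false_of_affine (a := 2) (b := 3) (by decide)
      (h2.minExp hp (by norm_num) (by decide) rfl 1 (by decide)) (k := m) ?_ (by omega)
    have e1 : (reflectMat (reflectMat q 0) 1 3 3 : ℂ) = t := by simpa using h2.diag 3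
    have e2 : qtil (reflectMat (reflectMat q 0) 1) 2 3 = p⁻¹ := by
      rw [h2.edge 2 3 (by decide)]; simp
    rwa [e1, e2]
  · right
    obtain ⟨m, -, hm⟩ := exists_minExp hm₀
    refine ⟨m, ?_, hm.1⟩
    by_contra! hlt
    have h2 := h1.reflect hp (by norm_num) 1 rfl ![1, 0, 1, 0] (d' := ![1, 2, -1, 1])
      (e' := ![![0, -1, 0, 0], ![-1, 0, 1, 0], ![0, 1, 0, 1], ![0, 0, 1, 0]]) (by decide)
    refine ((hq.reflect 2).reflect 1).false_of_affine (a := 2) (b := 3) (by decide)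
      (h2.minExp hp (by norm_num) (by decide) rfl 1 (by decide)) (k := m) ?_ (by omega)
    have e1 : (reflectMat (reflectMat q 2) 1 3 3 : ℂ) = p * t := by simpa using h2.diag 3
    have e2 : qtil (reflectMat (reflectMat q 2) 1) 2 3 = p := by
      rw [h2.edge 2 3 (by decide)]; simp
    rwa [e1, e2]

lemma exists_primitive_twentyfour (hp : IsPrimitiveRoot p 4) :
    ∃ ζ : ℂ, IsPrimitiveRoot ζ 24 ∧ ζ ^ 6 = p := by
  have h0 := Complex.isPrimitiveRoot_exp 24 (by norm_num)
  set ξ := Complex.exp (2 * Real.pi * Complex.I / (24 : ℕ))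
  have h1 : IsPrimitiveRoot (ξ ^ 6) 4 := h0.pow (by norm_num) (by norm_num)
  rcases sq_eq_sq_iff_eq_or_eq_neg.1 ((sq_of_four h1).trans (sq_of_four hp).symm) with h | h
  · exact ⟨ξ, h0, h⟩
  · refine ⟨ξ ^ 7, h0.pow_of_coprime 7 (by norm_num), ?_⟩
    have h2 := sq_of_four h1
    linear_combination ξ ^ 6 * ((ξ ^ 6) ^ 4 - (ξ ^ 6) ^ 2 + 1) * h2 - h

/-- The possible values of `q_{ℓℓ}`, as exponents of a primitive root of order `24`. -/
def chainExponents : Finset ℕ := {2, 3, 6, 8, 10, 12, 15, 16}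

lemma chain_four_exponents (hζ : IsPrimitiveRoot ζ 24) (ht1 : t ≠ 1) (hpt : ζ ^ 6 * t ≠ 1)
    (h : (∃ m ≤ 3, t ^ m * (ζ ^ 6)⁻¹ = 1) ∨ ∃ m ≤ 3, (ζ ^ 6 * t) ^ m * ζ ^ 6 = 1) :
    ∃ x ∈ chainExponents, t = ζ ^ x := by
  have hz : ζ ≠ 0 := hζ.ne_zero (by norm_num)
  have h24 := hζ.pow_eq_one
  have h6 : ζ ^ 6 ≠ 1 := hζ.pow_ne_one_of_pos_of_lt (by norm_num) (by norm_num)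
  have hdvd : ∀ m, m ≠ 0 → m ≤ 3 → t ^ (m * 4) = 1 → t ^ 24 = 1 := by
    intro m hm hm' h1
    obtain ⟨c, hc⟩ : m * 4 ∣ 24 := by interval_cases m <;> simp_all
    rw [hc, pow_mul, h1, one_pow]
  have ht : t ^ 24 = 1 := by
    rcases h with ⟨m, hm, h⟩ | ⟨m, hm, h⟩
    · rw [mul_inv_eq_one₀ (pow_ne_zero _ hz)] at h
      refine hdvd m ?_ hm (by rw [pow_mul, h]; linear_combination h24)
      rintro rfl
      exact h6 (by simpa using h.symm)
    · refine hdvd m ?_ hm ?_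
      · rintro rfl
        exact h6 (by simpa using h)
      · have h1 : ((ζ ^ 6 * t) ^ m * ζ ^ 6) ^ 4 = (ζ ^ 24) ^ m * t ^ (m * 4) * ζ ^ 24 := by
          rw [← pow_mul, mul_comm 24 m, pow_mul t, mul_pow, mul_pow]; ring
        rw [h, h24] at h1
        simpa using h1.symm
  obtain ⟨x, hx, rfl⟩ := hζ.eq_pow_of_pow_eq_one ht
  refine ⟨x, ?_, rfl⟩
  have hx0 : x ≠ 0 := by rintro rfl; simp at ht1
  have hx18 : x ≠ 18 := by
    rintro rfl
    exact hpt (by linear_combination h24)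
  rcases h with ⟨m, hm, h⟩ | ⟨m, hm, h⟩
  · have h1 : 24 ∣ x * m + 18 := by
      rw [← hζ.pow_eq_one_iff_dvd]
      rw [mul_inv_eq_one₀ (pow_ne_zero _ hz), ← pow_mul] at h
      rw [pow_add, h]; linear_combination h24
    simp only [chainExponents, Finset.mem_insert, Finset.mem_singleton]
    interval_cases m <;> omega
  · have h1 : 24 ∣ (6 + x) * m + 6 := by
      rw [← hζ.pow_eq_one_iff_dvd, pow_add, pow_mul, pow_add]
      exact h
    simp only [chainExponents, Finset.mem_insert, Finset.mem_singleton]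
    interval_cases m <;> omega

/-- The matrix of `x_{jℓ}, x_j` is not of finite type. -/
lemma false_of_pair {q : Fin 2 → Fin 2 → ℂˣ} (hζ : IsPrimitiveRoot ζ 24) (hq : GoodMat q)
    {x : ℕ} (hx : x ∈ chainExponents)
    (h : ExpDiagram ζ (fun _ => 1) ![(x : ℤ) - 6, -6] ![![0, 12], ![12, 0]] q) : False := by
  have hN : 24 ≠ 0 := by norm_num
  have h01 : (0 : Fin 2) ≠ 1 := by decide
  simp only [chainExponents, Finset.mem_insert, Finset.mem_singleton] at hx
  rcases hx with rfl | rfl | rfl | rfl | rfl | rfl | rfl | rfl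
  · exact h.false_of_affine hζ hN hq h01 rfl rfl 3 2 (by decide)
  · exact h.false_of_affine hζ hN hq h01 rfl rfl 4 2 (by decide)
  · exact h.false_of_one hζ hq h01 rfl (by decide)
  · exact h.false_of_affine hζ hN hq h01 rfl rfl 6 2 (by decide)
  · exact h.false_of_affine hζ hN hq h01 rfl rfl 3 2 (by decide)
  · exact h.false_of_affine hζ hN hq h01 rfl rfl 2 2 (by decide)
  · exact h.false_of_affine hζ hN hq h01 rfl rfl 4 2 (by decide)
  · exact h.false_of_affine hζ hN hq h01 rfl rfl 6 2 (by decide)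

/-- The matrix of `[x_{jkℓ}, x_k]_c, x_i, x_j` is not of finite type. -/
lemma false_of_triple {q : Fin 3 → Fin 3 → ℂˣ} (hζ : IsPrimitiveRoot ζ 24) (hq : GoodMat q)
    {x : ℕ} (hx : x ∈ chainExponents)
    (h : ExpDiagram ζ (fun _ => 1) ![(x : ℤ) + 18, 12, -6]
      ![![0, 6, 0], ![6, 0, 6], ![0, 6, 0]] q) : False := by
  have hN : 24 ≠ 0 := by norm_num
  have h02 : (0 : Fin 3) ≠ 2 := by decide
  have h1 := h.reflect hζ hN 1 rfl ![1, 0, 1] (d' := ![(x : ℤ) + 12, 12, 12])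
    (e' := ![![0, -6, 12], ![-6, 0, -6], ![12, -6, 0]]) (by
      simp only [chainExponents, Finset.mem_insert, Finset.mem_singleton] at hx
      rcases hx with rfl | rfl | rfl | rfl | rfl | rfl | rfl | rfl <;> decide)
  simp only [chainExponents, Finset.mem_insert, Finset.mem_singleton] at hx
  rcases hx with rfl | rfl | rfl | rfl | rfl | rfl | rfl | rfl
  · exact h1.false_of_affine hζ hN (hq.reflect 1) h02 rfl rfl 6 1 (by decide)
  · exact h1.false_of_affine hζ hN (hq.reflect 1) h02 rfl rfl 4 1 (by decide)
  · exact h.false_of_one hζ hq (a := 0) (b := 1) (by decide) rfl (by decide)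
  · have h2 := h1.reflect hζ hN 0 rfl ![0, 5, 3] (d' := ![-4, 2, 12])
      (e' := ![![0, -2, 12], ![-2, 0, 12], ![12, 12, 0]]) (by decide)
    exact h2.false_of_affine hζ hN ((hq.reflect 1).reflect 0) (a := 1) (b := 2) (by decide)
      rfl rfl 6 1 (by decide)
  · exact h1.false_of_affine hζ hN (hq.reflect 1) h02 rfl rfl 6 1 (by decide)
  · exact h1.false_of_one hζ (hq.reflect 1) h02 rfl (by decide)
  · exact h1.false_of_affine hζ hN (hq.reflect 1) h02 rfl rfl 4 1 (by decide)
  · have h2 := h1.reflect hζ hN 0 rfl ![0, 5, 3] (d' := ![4, 10, 12])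
      (e' := ![![0, -10, 12], ![-10, 0, 12], ![12, 12, 0]]) (by decide)
    exact h2.false_of_affine hζ hN ((hq.reflect 1).reflect 0) (a := 1) (b := 2) (by decide)
      rfl rfl 6 1 (by decide)

end OrderFour

section Families

variable {θ : ℕ} {q : Fin θ → Fin θ → ℂˣ} {S : BraidedStr θ q} {I : Submodule ℂ (TV θ)}

lemma coord_homogD {d : Fin θ → ℕ} {x : TV θ} (hx : x ∈ homogD θ d) {v : List (Fin θ)}
    (hv : v.length < ∑ t, d t) : (wordBasis θ).coord v x = 0 := by
  have h : homogD θ d ≤ LinearMap.ker ((wordBasis θ).coord v) := by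
    refine Submodule.span_le.2 ?_
    rintro _ ⟨w, rfl, rfl⟩
    rw [← length_eq_sum_degW] at hv
    rw [SetLike.mem_coe, LinearMap.mem_ker, coord_word, if_neg]
    rintro rfl
    exact hv.false
  exact h hx

lemma primitiveMod_gen (i : Fin θ) : PrimitiveMod S I (gen θ i) := by
  rw [PrimitiveMod, S.Δ_gen, sub_self]
  exact zero_mem _

lemma coord_sum_gen {n : ℕ} {ι : Fin n → Fin θ} (hι : Function.Injective ι) (c : Fin n → ℂ)
    (a : Fin n) : (wordBasis θ).coord [ι a] (∑ b, c b • gen θ (ι b)) = c a := by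
  rw [map_sum, Finset.sum_eq_single a]
  · rw [map_smul, ← wordElem_singleton, coord_word]
    simp
  · intro b _ hb
    rw [map_smul, ← wordElem_singleton, coord_word, if_neg (by simpa using hι.ne hb), smul_zero]
  · simp

lemma coord_nil_sum_gen {n : ℕ} (ι : Fin n → Fin θ) (c : Fin n → ℂ) :
    (wordBasis θ).coord [] (∑ b, c b • gen θ (ι b)) = 0 := by
  rw [map_sum]
  refine Finset.sum_eq_zero fun b _ => ?_
  rw [map_smul, ← wordElem_singleton, coord_word]
  simp

/-- A linear combination of `1` and distinct generators lying in `I` up to an element of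
degree at least two is trivial. -/
lemma IsPreNicholsIdeal.coeff_eq_zero (hI : IsPreNicholsIdeal S I) {n : ℕ} {ι : Fin n → Fin θ}
    (hι : Function.Injective ι) {d : Fin θ → ℕ} (hd : 2 ≤ ∑ t, d t) {u : TV θ}
    (hu : u ∈ homogD θ d) {c₀ : ℂ} {c : Fin n → ℂ}
    (h : c₀ • 1 + (u + ∑ a, c a • gen θ (ι a)) ∈ I) : c₀ = 0 ∧ c = 0 := by
  have h1 : ∀ v, (wordBasis θ).coord v (1 : TV θ) = if [] = v then 1 else 0 :=
    fun v => coord_word v []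
  constructor
  · have := hI.coord_eq_zero h (v := []) (by simp)
    rw [map_add, map_add, coord_nil_sum_gen, coord_homogD hu (by simp; omega), map_smul, h1] at this
    simpa using this
  · funext a
    have := hI.coord_eq_zero h (v := [ι a]) (by simp)
    rw [map_add, map_add, coord_sum_gen hι, coord_homogD hu (by simp; omega), map_smul, h1] at this
    simpa using this

lemma goodMat_gens (hAAH : AAH) (hI : IsPreNicholsIdeal S I) (hGK : FinGK I) {n : ℕ}
    {ι : Fin (n + 1) → Fin θ} (hι : Function.Injective ι) :
    GoodMat (subMat q fun a => δ θ (ι a)) := by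
  refine (finiteRootSystem_subMat hAAH hI hGK (y := fun a => gen θ (ι a))
    (fun a => gen_mem_homogD _) (fun a => primitiveMod_gen (S := S) _) fun c₀ c h => ?_).goodMat
  have hd : 2 ≤ ∑ t, (fun _ => 2 : Fin θ → ℕ) t := by
    have := (ι 0).pos
    simp
    omega
  exact hI.coeff_eq_zero hι hd (zero_mem (homogD θ _)) (by simpa using h)

lemma goodMat_cons (hAAH : AAH) (hI : IsPreNicholsIdeal S I) (hGK : FinGK I) {n : ℕ}
    {ι : Fin n → Fin θ} (hι : Function.Injective ι) {d : Fin θ → ℕ} (hd : 2 ≤ ∑ t, d t)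
    {u : TV θ} (hu : u ∈ homogD θ d) (hp : PrimitiveMod S I u) (huI : u ∉ I) :
    GoodMat (subMat q (Matrix.vecCons d fun a => δ θ (ι a))) := by
  refine (finiteRootSystem_subMat hAAH hI hGK (y := Matrix.vecCons u fun a => gen θ (ι a))
    (fun a => ?_) (fun a => ?_) fun c₀ c h => ?_).goodMat
  · refine Fin.cases ?_ (fun a => ?_) a
    · exact hu
    · exact gen_mem_homogD _
  · refine Fin.cases ?_ (fun a => ?_) a
    · exact hp
    · exact primitiveMod_gen _
  · rw [Fin.sum_univ_succ] at h
    simp only [Matrix.cons_val_zero, Matrix.cons_val_succ] at h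
    obtain ⟨rfl, hc⟩ := hI.coeff_eq_zero (c := fun a => c a.succ) hι hd
      (Submodule.smul_mem _ (c 0) hu) h
    refine ⟨rfl, funext fun a => Fin.cases ?_ (fun a => congrFun hc a) a⟩
    by_contra h0
    refine huI ((Submodule.smul_mem_iff I h0).1 ?_)
    simpa [fun a => congrFun hc a] using h

end Families

section Coproduct

variable {θ : ℕ} {q : Fin θ → Fin θ → ℂˣ} {S : BraidedStr θ q} {I : Submodule ℂ (TV θ)}

lemma brk_mem_homogD {a b : Fin θ → ℕ} {u v : TV θ} (hu : u ∈ homogD θ a) (hv : v ∈ homogD θ b) :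
    brk q a b u v ∈ homogD θ (a + b) :=
  sub_mem (mul_mem_homogD hu hv)
    (Submodule.smul_mem _ _ (add_comm b a ▸ mul_mem_homogD hv hu))

lemma BraidedStr.mulB_Δ_gen_left (S : BraidedStr θ q) (i : Fin θ) {α : Fin θ → ℕ} {a : TV θ}
    (ha : a ∈ homogD θ α) (b : TV θ) : S.mulB (S.Δ (gen θ i)) (a ⊗ₜ b) =
      (gen θ i * a) ⊗ₜ b + qf q (δ θ i) α • (a ⊗ₜ (gen θ i * b)) := by
  rw [S.Δ_gen, map_add, LinearMap.add_apply, S.mulB_homog _ _ one_mem_homogD ha,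
    S.mulB_homog _ _ (gen_mem_homogD i) ha]
  simp [qf_zero_left]

lemma BraidedStr.mulB_Δ_gen_right (S : BraidedStr θ q) (i : Fin θ) {β : Fin θ → ℕ} {b : TV θ}
    (hb : b ∈ homogD θ β) (a : TV θ) : S.mulB (a ⊗ₜ b) (S.Δ (gen θ i)) =
      qf q β (δ θ i) • ((a * gen θ i) ⊗ₜ b) + a ⊗ₜ (b * gen θ i) := by
  rw [S.Δ_gen, map_add, S.mulB_homog _ _ hb one_mem_homogD,
    S.mulB_homog _ _ hb (gen_mem_homogD i)]
  simp [qf_zero_right]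

lemma Δ_brk_gen (S : BraidedStr θ q) (i j : Fin θ) :
    S.Δ (brk q (δ θ i) (δ θ j) (gen θ i) (gen θ j)) =
      brk q (δ θ i) (δ θ j) (gen θ i) (gen θ j) ⊗ₜ 1 +
      1 ⊗ₜ brk q (δ θ i) (δ θ j) (gen θ i) (gen θ j) +
      (1 - qtil q i j) • (gen θ i ⊗ₜ gen θ j) := by
  simp only [brk, map_sub, map_smul, S.Δ_mul]
  rw [S.Δ_gen j, map_add, map_add, LinearMap.add_apply, S.mulB_Δ_gen_left i (gen_mem_homogD j),
    S.mulB_Δ_gen_left i one_mem_homogD, S.mulB_Δ_gen_right i (gen_mem_homogD j),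
    S.mulB_Δ_gen_right i one_mem_homogD]
  simp only [qf_zero_left, qf_zero_right, qf_delta, qtil, TensorProduct.sub_tmul,
    TensorProduct.tmul_sub, ← TensorProduct.smul_tmul', TensorProduct.tmul_smul, mul_one, one_mul]
  module

lemma primitiveMod_brk_gen {i j : Fin θ} (h : qtil q i j = 1) :
    PrimitiveMod S I (brk q (δ θ i) (δ θ j) (gen θ i) (gen θ j)) := by
  rw [PrimitiveMod, Δ_brk_gen, h]
  simp

end Coproduct

section RankFour

variable {θ : ℕ} {q : Fin θ → Fin θ → ℂˣ} {S : BraidedStr θ q} {I : Submodule ℂ (TV θ)}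

lemma Δ_brk_brk_gen (S : BraidedStr θ q) {j k l : Fin θ} (h : qtil q j l = 1) :
    S.Δ (brk q (δ θ j) (δ θ k + δ θ l) (gen θ j) (brk q (δ θ k) (δ θ l) (gen θ k) (gen θ l))) =
      brk q (δ θ j) (δ θ k + δ θ l) (gen θ j) (brk q (δ θ k) (δ θ l) (gen θ k) (gen θ l)) ⊗ₜ 1 +
      1 ⊗ₜ brk q (δ θ j) (δ θ k + δ θ l) (gen θ j)
        (brk q (δ θ k) (δ θ l) (gen θ k) (gen θ l)) +
      (1 - qtil q j k) • (gen θ j ⊗ₜ brk q (δ θ k) (δ θ l) (gen θ k) (gen θ l)) +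
      (1 - qtil q k l) • (brk q (δ θ j) (δ θ k) (gen θ j) (gen θ k) ⊗ₜ gen θ l) +
      ((1 - qtil q k l) * q j k) •
        (gen θ k ⊗ₜ brk q (δ θ j) (δ θ l) (gen θ j) (gen θ l)) := by
  have hkl : brk q (δ θ k) (δ θ l) (gen θ k) (gen θ l) ∈ homogD θ (δ θ k + δ θ l) :=
    brk_mem_homogD (gen_mem_homogD k) (gen_mem_homogD l)
  rw [brk, map_sub, map_smul, S.Δ_mul, S.Δ_mul, Δ_brk_gen]
  simp only [map_add, map_smul, LinearMap.add_apply, LinearMap.smul_apply]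
  rw [S.mulB_Δ_gen_left j hkl, S.mulB_Δ_gen_left j one_mem_homogD,
    S.mulB_Δ_gen_left j (gen_mem_homogD k), S.mulB_Δ_gen_right j hkl,
    S.mulB_Δ_gen_right j one_mem_homogD, S.mulB_Δ_gen_right j (gen_mem_homogD l)]
  simp only [qtil] at h
  simp only [brk, qf_zero_left, qf_zero_right, qf_add_left, qf_add_right, qf_delta, qtil,
    TensorProduct.sub_tmul, TensorProduct.tmul_sub, ← TensorProduct.smul_tmul',
    TensorProduct.tmul_smul, mul_one, one_mul]
  match_scalars <;> grind

/-- If `x_k² = x_{jl} = 0` modulo `I`, then `[x_{jkl}, x_k]` is primitive modulo `I`. -/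
lemma primitiveMod_brk_brk_brk (hI : IsPreNicholsIdeal S I) {j k l : Fin θ} {p : ℂ}
    (hp : p ^ 4 = 1) (hjk : qtil q j k = p) (hkl : qtil q k l = p ^ 3) (hjl : qtil q j l = 1)
    (hkk : (q k k : ℂ) = -1) (hk : gen θ k * gen θ k ∈ I)
    (hx : brk q (δ θ j) (δ θ l) (gen θ j) (gen θ l) ∈ I) :
    PrimitiveMod S I (brk q (δ θ j + (δ θ k + δ θ l)) (δ θ k) (brk q (δ θ j) (δ θ k + δ θ l)
      (gen θ j) (brk q (δ θ k) (δ θ l) (gen θ k) (gen θ l))) (gen θ k)) := by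
  have mkl : brk q (δ θ k) (δ θ l) (gen θ k) (gen θ l) ∈ homogD θ (δ θ k + δ θ l) :=
    brk_mem_homogD (gen_mem_homogD k) (gen_mem_homogD l)
  have mjk : brk q (δ θ j) (δ θ k) (gen θ j) (gen θ k) ∈ homogD θ (δ θ j + δ θ k) :=
    brk_mem_homogD (gen_mem_homogD j) (gen_mem_homogD k)
  have mjkl := brk_mem_homogD (q := q) (gen_mem_homogD j) mkl
  set u := brk q (δ θ j) (δ θ k + δ θ l) (gen θ j)
    (brk q (δ θ k) (δ θ l) (gen θ k) (gen θ l)) with hu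
  set m := gen θ k ⊗ₜ[ℂ] brk q (δ θ j) (δ θ l) (gen θ j) (gen θ l) with hm
  have hmI : m ∈ mixedSub I := tmul_mem_mixedSub_right _ hx
  set c := qf q (δ θ j + (δ θ k + δ θ l)) (δ θ k) with hc
  have key : S.Δ (brk q (δ θ j + (δ θ k + δ θ l)) (δ θ k) u (gen θ k)) -
      (brk q (δ θ j + (δ θ k + δ θ l)) (δ θ k) u (gen θ k) ⊗ₜ 1 +
        1 ⊗ₜ brk q (δ θ j + (δ θ k + δ θ l)) (δ θ k) u (gen θ k)) =
      (1 - p) • (gen θ j ⊗ₜ ((p * q l k) • (gen θ k * gen θ k * gen θ l) -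
        (q k l : ℂ) • (gen θ l * (gen θ k * gen θ k)))) +
      ((1 - p ^ 3) * q l k) • ((gen θ j * (gen θ k * gen θ k) -
        (q j k : ℂ) ^ 2 • (gen θ k * gen θ k * gen θ j)) ⊗ₜ gen θ l) +
      ((1 - p ^ 3) * q j k) • (S.mulB m (S.Δ (gen θ k)) - c • S.mulB (S.Δ (gen θ k)) m) := by
    have hΔ := Δ_brk_brk_gen S (k := k) hjl
    rw [← hu, ← hm] at hΔ
    have e1 : brk q (δ θ j + (δ θ k + δ θ l)) (δ θ k) u (gen θ k) =
        u * gen θ k - c • (gen θ k * u) := rfl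
    rw [e1, map_sub, map_smul, S.Δ_mul, S.Δ_mul, hΔ]
    simp only [map_add, map_smul, LinearMap.add_apply, LinearMap.smul_apply]
    rw [S.mulB_Δ_gen_left k mjkl, S.mulB_Δ_gen_left k one_mem_homogD,
      S.mulB_Δ_gen_left k (gen_mem_homogD j), S.mulB_Δ_gen_left k mjk,
      S.mulB_Δ_gen_right k mjkl, S.mulB_Δ_gen_right k one_mem_homogD,
      S.mulB_Δ_gen_right k mkl, S.mulB_Δ_gen_right k (gen_mem_homogD l), hjk, hkl, hc]
    clear_value m
    simp only [qtil] at hjk hkl hjl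
    simp only [brk, qf_zero_left, qf_zero_right, qf_add_left, qf_add_right, qf_delta, hkk, mul_sub,
      sub_mul, smul_mul_assoc, mul_smul_comm, mul_assoc, smul_sub,
      TensorProduct.sub_tmul, TensorProduct.tmul_sub, ← TensorProduct.smul_tmul',
      TensorProduct.tmul_smul, mul_one, one_mul]
    clear_value u
    clear hmI hx hk mkl mjk mjkl hu hΔ e1 hm
    match_scalars <;> grind
  rw [PrimitiveMod, key]
  refine add_mem (add_mem (Submodule.smul_mem _ _ (tmul_mem_mixedSub_right _ ?_))
    (Submodule.smul_mem _ _ (tmul_mem_mixedSub_left _ ?_))) (Submodule.smul_mem _ _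
      (sub_mem (hI.mulB_mem_left _ hmI) (Submodule.smul_mem _ _ (hI.mulB_mem_right _ hmI))))
  · exact sub_mem (Submodule.smul_mem _ _ (hI.mul_right _ _ hk))
      (Submodule.smul_mem _ _ (hI.mul_left _ _ hk))
  · exact sub_mem (hI.mul_left _ _ hk) (Submodule.smul_mem _ _ (hI.mul_right _ _ hk))

end RankFour

section Relation

variable {θ : ℕ} {q : Fin θ → Fin θ → ℂˣ} {S : BraidedStr θ q} {I : Submodule ℂ (TV θ)}

lemma sum_delta (i : Fin θ) : ∑ t, δ θ i t = 1 := by simp [δ]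

lemma brk_gen_mem (hAAH : AAH) (hI : IsPreNicholsIdeal S I) (hGK : FinGK I) {a b j : Fin θ}
    (hab : qtil q a b = 1) (hd : (q a a : ℂ) * q b b = 1) (hj : qtil q a j * qtil q b j ≠ 1) :
    brk q (δ θ a) (δ θ b) (gen θ a) (gen θ b) ∈ I := by
  by_contra h
  have hg := goodMat_cons hAAH hI hGK (ι := ![j]) (Function.injective_of_subsingleton _)
    (d := δ θ a + δ θ b) (by simp [Finset.sum_add_distrib, sum_delta])
    (brk_mem_homogD (gen_mem_homogD a) (gen_mem_homogD b)) (primitiveMod_brk_gen hab) h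
  refine hg.false_of_one (a := 0) (b := 1) (by decide) ?_ ?_
  · simp only [subMat, Units.val_mk0, Matrix.cons_val_zero, qf_add_left, qf_add_right, qf_delta]
    rw [qtil] at hab
    linear_combination (q a a : ℂ) * q b b * hab + hd
  · intro e
    apply hj
    simp [subMat, qtil, qf_add_left, qf_add_right, qf_delta] at e
    simp only [qtil]
    linear_combination e

lemma brk_gen_mem_of_pair (hAAH : AAH) (hI : IsPreNicholsIdeal S I) (hGK : FinGK I)
    {j l : Fin θ} {ζ : ℂ} (hζ : IsPrimitiveRoot ζ 24) {x : ℕ} (hx : x ∈ chainExponents)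
    (hjl : qtil q j l = 1) (hj : (q j j : ℂ) = ζ ^ (-6 : ℤ)) (hl : (q l l : ℂ) = ζ ^ x) :
    brk q (δ θ j) (δ θ l) (gen θ j) (gen θ l) ∈ I := by
  by_contra h
  have hz : ζ ≠ 0 := hζ.ne_zero (by norm_num)
  have hg := goodMat_cons hAAH hI hGK (ι := ![j]) (Function.injective_of_subsingleton _)
    (d := δ θ j + δ θ l) (by simp [Finset.sum_add_distrib, sum_delta])
    (brk_mem_homogD (gen_mem_homogD j) (gen_mem_homogD l)) (primitiveMod_brk_gen hjl) h
  have h12 : (ζ ^ (-6 : ℤ)) ^ 2 = ζ ^ (12 : ℤ) := by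
    rw [← zpow_natCast, ← zpow_mul]
    exact zpow_eq_of_dvd hζ (by norm_num) (by norm_num)
  have hedge : qtil (subMat q (Matrix.vecCons (δ θ j + δ θ l) fun a => δ θ (![j] a))) 0 1 =
      ζ ^ (12 : ℤ) := by
    rw [← h12, ← hj]
    rw [qtil] at hjl
    simp only [subMat, qtil, qf_add_left, qf_add_right, qf_delta, Units.val_mk0,
      Matrix.cons_val_zero, Matrix.cons_val_one, Matrix.cons_val_fin_one]
    linear_combination (q j j : ℂ) ^ 2 * hjl
  refine false_of_pair hζ hg hx ⟨fun a => ?_, fun a b hab => ?_⟩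
  · fin_cases a
    · rw [qtil] at hjl
      have e : ζ ^ ((x : ℤ) - 6) = q j j * q l l := by
        rw [hj, hl, ← zpow_natCast, ← zpow_add₀ hz]
        congr 1
      simp [subMat, qf_add_left, qf_add_right, qf_delta, e]
      linear_combination (q j j : ℂ) * q l l * hjl
    · simp [subMat, qf_delta, hj]
  · fin_cases a <;> fin_cases b
    · exact absurd rfl hab
    · exact hedge
    · exact (qtil_comm _ _).trans hedge
    · exact absurd rfl hab

lemma brk_brk_brk_mem_of_triple (hAAH : AAH) (hI : IsPreNicholsIdeal S I) (hGK : FinGK I)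
    {i j k l : Fin θ} (hij : i ≠ j) {p ζ : ℂ} (hζ : IsPrimitiveRoot ζ 24) (hp : ζ ^ 6 = p)
    {x : ℕ} (hx : x ∈ chainExponents) (hj : (q j j : ℂ) = p⁻¹) (hl : (q l l : ℂ) = ζ ^ x)
    (h1 : qtil q j k = p) (h2 : qtil q i j = p) (h4 : (q i i : ℂ) = -1) (h5 : (q k k : ℂ) = -1)
    (h6 : qtil q i k = 1) (h7 : qtil q i l = 1) (h8 : qtil q j l = 1) (h9 : qtil q k l = p ^ 3)
    (hk : gen θ k * gen θ k ∈ I) (hjl : brk q (δ θ j) (δ θ l) (gen θ j) (gen θ l) ∈ I) :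
    brk q (δ θ j + (δ θ k + δ θ l)) (δ θ k) (brk q (δ θ j) (δ θ k + δ θ l)
      (gen θ j) (brk q (δ θ k) (δ θ l) (gen θ k) (gen θ l))) (gen θ k) ∈ I := by
  by_contra h
  have hp4 : p ^ 4 = 1 := by rw [← hp, ← pow_mul, hζ.pow_eq_one]
  have hp0 : p ≠ 0 := by rintro rfl; norm_num at hp4
  have hι : Function.Injective ![i, j] := by
    intro a b
    fin_cases a <;> fin_cases b <;> simp [hij, hij.symm]
  have hg := goodMat_cons hAAH hI hGK hι
    (d := δ θ j + (δ θ k + δ θ l) + δ θ k) (by simp [Finset.sum_add_distrib, sum_delta])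
    (brk_mem_homogD (brk_mem_homogD (gen_mem_homogD j) (brk_mem_homogD (gen_mem_homogD k)
      (gen_mem_homogD l))) (gen_mem_homogD k))
    (primitiveMod_brk_brk_brk hI hp4 h1 h9 h8 h5 hk hjl) h
  set Q := subMat q (Matrix.vecCons (δ θ j + (δ θ k + δ θ l) + δ θ k) fun a => δ θ (![i, j] a))
    with hQ
  have h12 : ζ ^ (12 : ℤ) = -1 := by
    have := (hζ.pow (by norm_num) (show 24 = 12 * 2 by norm_num)).eq_neg_one_of_two_right
    exact_mod_cast this
  have h6' : ζ ^ (6 : ℤ) = p := by exact_mod_cast hp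
  have h6n : ζ ^ (-6 : ℤ) = p⁻¹ := by rw [zpow_neg, h6']
  have hxe : ζ ^ ((x : ℤ) + 18) = p ^ 3 * q l l := by
    rw [hl, ← hp]
    have : (x : ℤ) + 18 = ((6 * 3 + x : ℕ) : ℤ) := by push_cast; ring
    rw [this, zpow_natCast, pow_add, pow_mul]
  simp only [qtil] at h1 h2 h6 h7 h8 h9
  have e01 : qtil Q 0 1 = ζ ^ (6 : ℤ) := by
    rw [h6']
    simp only [hQ, subMat, qtil, qf_add_left, qf_add_right, qf_delta, Units.val_mk0,
      Matrix.cons_val_zero, Matrix.cons_val_one]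
    grind
  have e02 : qtil Q 0 2 = ζ ^ (0 : ℤ) := by
    rw [zpow_zero]
    simp [hQ, subMat, qtil, qf_add_left, qf_add_right, qf_delta]
    grind
  have e12 : qtil Q 1 2 = ζ ^ (6 : ℤ) := by
    rw [h6', ← h2]
    simp [hQ, subMat, qtil, qf_delta]
  refine false_of_triple hζ hg hx ⟨fun a => ?_, fun a b hab => ?_⟩
  · fin_cases a
    · simp [hQ, subMat, qf_add_left, qf_add_right, qf_delta, hxe, h5]
      grind
    · simp [hQ, subMat, qf_delta, h12, h4]
    · simp [hQ, subMat, qf_delta, h6n, hj]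
  · fin_cases a <;> fin_cases b
    · exact absurd rfl hab
    · exact e01
    · exact e02
    · exact (qtil_comm _ _).trans e01
    · exact absurd rfl hab
    · exact e12
    · exact (qtil_comm _ _).trans e02
    · exact (qtil_comm _ _).trans e12
    · exact absurd rfl hab

lemma expDiagram_gens {i j k l : Fin θ} {p : ℂ} {s : ℤ} (hs : p ^ s = -1)
    (hj : (q j j : ℂ) = p⁻¹) (h1 : qtil q j k = p) (h2 : qtil q i j = p)
    (h4 : (q i i : ℂ) = -1) (h5 : (q k k : ℂ) = -1) (h6 : qtil q i k = 1) (h7 : qtil q i l = 1)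
    (h8 : qtil q j l = 1) (h9 : qtil q k l = p ^ 3) :
    ExpDiagram p ![1, 1, 1, (q l l : ℂ)] ![s, -1, s, 0] chainEdges
      (subMat q fun a => δ θ (![i, j, k, l] a)) := by
  have e : ∀ a b, qtil (subMat q fun a => δ θ (![i, j, k, l] a)) a b =
      qtil q (![i, j, k, l] a) (![i, j, k, l] b) := fun a b => by
    simp [qtil, subMat, qf_delta]
  have h3 : p ^ (3 : ℤ) = p ^ 3 := by norm_cast
  refine ⟨fun a => ?_, fun a b hab => ?_⟩
  · fin_cases a <;> simp [subMat, qf_delta, *]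
  · rw [e]
    fin_cases a <;> fin_cases b <;> first | exact absurd rfl hab | skip
    all_goals first
      | simp [*]; done
      | rw [qtil_comm]; simp [*]

/-- If `x_{ik} = 0` and `[x_{jkl}, x_k] = 0` modulo `I`, then `[x_{ijkl}, x_k] = 0` modulo `I`. -/
lemma brk_xw_mem (hI : IsPreNicholsIdeal S I) {i j k l : Fin θ}
    (hik : brk q (δ θ i) (δ θ k) (gen θ i) (gen θ k) ∈ I)
    (hy : brk q (δ θ j + (δ θ k + δ θ l)) (δ θ k) (brk q (δ θ j) (δ θ k + δ θ l)
      (gen θ j) (brk q (δ θ k) (δ θ l) (gen θ k) (gen θ l))) (gen θ k) ∈ I) :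
    brk q (δ θ i + δ θ j + δ θ k + δ θ l) (δ θ k) (xw q [i, j, k, l]) (gen θ k) ∈ I := by
  have e : xw q [i, j, k, l] = brk q (δ θ i) (δ θ j + (δ θ k + δ θ l)) (gen θ i)
      (brk q (δ θ j) (δ θ k + δ θ l) (gen θ j) (brk q (δ θ k) (δ θ l) (gen θ k) (gen θ l))) := by
    simp only [xw, ad1, degW_cons, degW_nil, add_zero]
  rw [e]
  set u := brk q (δ θ j) (δ θ k + δ θ l) (gen θ j) (brk q (δ θ k) (δ θ l) (gen θ k) (gen θ l))
  have key : brk q (δ θ i + δ θ j + δ θ k + δ θ l) (δ θ k)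
      (brk q (δ θ i) (δ θ j + (δ θ k + δ θ l)) (gen θ i) u) (gen θ k) =
      gen θ i * brk q (δ θ j + (δ θ k + δ θ l)) (δ θ k) u (gen θ k) -
      (qf q (δ θ i) (δ θ j + (δ θ k + δ θ l)) * q i k) •
        (brk q (δ θ j + (δ θ k + δ θ l)) (δ θ k) u (gen θ k) * gen θ i) +
      qf q (δ θ j + (δ θ k + δ θ l)) (δ θ k) •
        (brk q (δ θ i) (δ θ k) (gen θ i) (gen θ k) * u) -
      qf q (δ θ i) (δ θ j + (δ θ k + δ θ l)) •
        (u * brk q (δ θ i) (δ θ k) (gen θ i) (gen θ k)) := by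
    clear_value u
    simp only [brk, qf_add_left, qf_add_right, qf_delta, mul_sub, sub_mul, smul_mul_assoc,
      mul_smul_comm, mul_assoc, smul_sub]
    match_scalars <;> grind
  rw [key]
  exact sub_mem (add_mem (sub_mem (hI.mul_left _ _ hy) (Submodule.smul_mem _ _
    (hI.mul_right _ _ hy))) (Submodule.smul_mem _ _ (hI.mul_right _ _ hik)))
    (Submodule.smul_mem _ _ (hI.mul_left _ _ hik))

end Relation

/-- Lemma 3.6: if `q̃_{jk} = q̃_{ij} = q_{jj}⁻¹ ∈ G₄' ∪ G₆'`,
`q_{ii} = q_{kk} = -1`, `q̃_{ik} = q̃_{iℓ} = q̃_{jℓ} = 1` and `q̃_{jk}³ = q̃_{ℓk}`,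
then `[[x_{ijk},[x_{ijkℓ},x_k]_c]_c,x_{jk}]_c = 0` in every finite-GKdim
pre-Nichols algebra of `q`. -/
theorem statement_10 (θ : ℕ) (q : Fin θ → Fin θ → ℂˣ) (S : BraidedStr θ q)
    (hconn : (dynkin q).Connected)
    (hfd : FiniteDimensional ℂ (TV θ ⧸ Jq S))
    (hAAH : AAH)
    (I : Submodule ℂ (TV θ)) (hI : IsPreNicholsIdeal S I) (hGK : FinGK I)
    (i j k l : Fin θ) (hij : i ≠ j) (hik : i ≠ k) (hil : i ≠ l)
    (hjk : j ≠ k) (hjl : j ≠ l) (hkl : k ≠ l)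
    (h1 : qtil q j k = ((q j j : ℂ))⁻¹) (h2 : qtil q i j = ((q j j : ℂ))⁻¹)
    (h3 : IsPrimitiveRoot ((q j j : ℂ))⁻¹ 4 ∨ IsPrimitiveRoot ((q j j : ℂ))⁻¹ 6)
    (h4 : (q i i : ℂ) = -1) (h5 : (q k k : ℂ) = -1)
    (h6 : qtil q i k = 1) (h7 : qtil q i l = 1) (h8 : qtil q j l = 1)
    (h9 : qtil q j k ^ 3 = qtil q l k) :
    brk q
      (δ θ i + δ θ j + δ θ k + (δ θ i + δ θ j + δ θ k + δ θ l + δ θ k))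
      (δ θ j + δ θ k)
      (brk q (δ θ i + δ θ j + δ θ k) (δ θ i + δ θ j + δ θ k + δ θ l + δ θ k)
        (xw q [i, j, k])
        (brk q (δ θ i + δ θ j + δ θ k + δ θ l) (δ θ k) (xw q [i, j, k, l]) (gen θ k)))
      (xw q [j, k]) ∈ I := by
  have hp6 : ((q j j : ℂ))⁻¹ ^ 3 = qtil q k l := by rw [qtil_comm k l, ← h9, h1]
  have hexp := fun {s : ℤ} (hs : ((q j j : ℂ))⁻¹ ^ s = -1) =>
    expDiagram_gens hs (inv_inv _).symm h1 h2 h4 h5 h6 h7 h8 hp6.symm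
  have hι : Function.Injective ![i, j, k, l] := by
    intro a b
    fin_cases a <;> fin_cases b <;>
      simp [hij, hik, hil, hjk, hjl, hkl, hij.symm, hik.symm, hil.symm, hjk.symm, hjl.symm,
        hkl.symm]
  have hgood := goodMat_gens hAAH hI hGK hι
  rcases h3 with hp | hp
  swap
  · exact (false_of_chain_six hp hgood (hexp (by exact_mod_cast pow_three_of_six hp))).elim
  obtain ⟨ht1, hpt, ht⟩ := chain_four_constraint hp hgood
    (hexp (by exact_mod_cast sq_of_four hp))
  obtain ⟨ζ, hζ, hζp⟩ := exists_primitive_twentyfour hp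
  have hp2 := sq_of_four hp
  rw [← hζp] at hpt ht
  obtain ⟨x, hx, hl⟩ := chain_four_exponents hζ ht1 hpt ht
  have hxik := brk_gen_mem hAAH hI hGK (a := i) (b := k) (j := j) h6 (by rw [h4, h5]; norm_num)
    (by rw [h2, qtil_comm k j, h1, ← sq, hp2]; norm_num)
  have hxkk := brk_gen_mem hAAH hI hGK (a := k) (b := k) (j := j) (by rw [qtil, h5]; norm_num)
    (by rw [h5]; norm_num) (by rw [qtil_comm k j, h1, ← sq, hp2]; norm_num)
  have hk : gen θ k * gen θ k ∈ I := by
    rw [brk, qf_delta, h5] at hxkk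
    have : gen θ k * gen θ k = (2⁻¹ : ℂ) •
        (gen θ k * gen θ k - (-1 : ℂ) • (gen θ k * gen θ k)) := by module
    rw [this]
    exact Submodule.smul_mem _ _ hxkk
  have hxjl := brk_gen_mem_of_pair hAAH hI hGK hζ hx h8
    (by rw [zpow_neg]; exact inv_eq_iff_eq_inv.1 (by exact_mod_cast hζp.symm)) hl
  have hy := brk_brk_brk_mem_of_triple hAAH hI hGK hij hζ hζp hx (inv_inv _).symm hl h1 h2 h4 h5
    h6 h7 h8 hp6.symm hk hxjl
  have hw := brk_xw_mem hI hxik hy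
  have brk_right : ∀ {a b : Fin θ → ℕ} {u v : TV θ}, v ∈ I → brk q a b u v ∈ I := fun hv =>
    sub_mem (hI.mul_left _ _ hv) (Submodule.smul_mem _ _ (hI.mul_right _ _ hv))
  have brk_left : ∀ {a b : Fin θ → ℕ} {u v : TV θ}, u ∈ I → brk q a b u v ∈ I := fun hv =>
    sub_mem (hI.mul_right _ _ hv) (Submodule.smul_mem _ _ (hI.mul_left _ _ hv))
  exact brk_left (brk_right hw)

end PreNicholsPaper
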